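/- $\sum_{n=0}^{\infty} \frac{\binom{2n}{n}}{(2n+1)^3\,16^n}\left(9 H_{2n+1} + \frac{32}{2n+1}\right) = 40\,\beta(4) + \frac{5\pi\,\zeta(3)}{12}$. -/

import Mathlib

open Filter Topology

/-- Harmonic number `H_n = ∑_{k=1}^n 1/k`. -/
noncomputable def H (n : ℕ) : ℝ := ∑ k ∈ Finset.range n, 1 / ((k:ℝ) + 1)

/-- The Dirichlet beta function `β(s) = ∑_{k ≥ 0} (-1)^k/(2k+1)^s`. -/
noncomputable def dirichletBeta (s : ℕ) : ℝ := ∑' k : ℕ, (-1:ℝ)^k / (2*(k:ℝ)+1)^s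

/-- The Riemann zeta value `ζ(s) = ∑_{n ≥ 1} 1/n^s`. -/
noncomputable def zeta (s : ℕ) : ℝ := ∑' n : ℕ, 1 / ((n:ℝ) + 1) ^ s


noncomputable def Ser (b : ℕ → ℝ) (n : ℕ) (u : ℂ) : ℂ :=
  ∑' k : ℕ, (b k : ℂ) * Complex.exp (((k:ℂ)+1) * u) / ((k:ℂ)+1)^n

lemma norm_kp1 (k : ℕ) : ‖((k:ℂ)+1)‖ = (k:ℝ)+1 := by
  have : ((k:ℂ)+1) = (((k:ℝ)+1 : ℝ) : ℂ) := by push_cast; rfl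
  rw [this, Complex.norm_real, Real.norm_of_nonneg (by positivity)]

lemma kp1_ne (k : ℕ) : ((k:ℂ)+1) ≠ 0 := Nat.cast_add_one_ne_zero k

lemma norm_exp_kp1 (k : ℕ) (u : ℂ) : ‖Complex.exp (((k:ℂ)+1) * u)‖ = Real.exp (u.re) ^ (k+1) := by
  rw [Complex.norm_exp, ← Real.exp_nat_mul]
  congr 1
  simp

lemma ser_term_le (b : ℕ → ℝ) (hb : ∀ k, |b k| ≤ 1) (n k : ℕ) (u : ℂ) :
    ‖(b k : ℂ) * Complex.exp (((k:ℂ)+1) * u) / ((k:ℂ)+1)^n‖ ≤ Real.exp (u.re) ^ (k+1) / ((k:ℝ)+1)^n := by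
  rw [norm_div, norm_mul, norm_pow, norm_kp1, norm_exp_kp1, Complex.norm_real, Real.norm_eq_abs]
  gcongr
  have h0 : 0 ≤ Real.exp (u.re) ^ (k+1) := by positivity
  nlinarith [hb k]

lemma ser_term_le' (b : ℕ → ℝ) (hb : ∀ k, |b k| ≤ 1) (n k : ℕ) (u : ℂ) :
    ‖(b k : ℂ) * Complex.exp (((k:ℂ)+1) * u) / ((k:ℂ)+1)^n‖ ≤ Real.exp (u.re) ^ (k+1) := by
  refine (ser_term_le b hb n k u).trans ?_
  apply div_le_self (by positivity)
  apply one_le_pow₀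
  linarith [Nat.cast_nonneg (α := ℝ) k]

lemma summable_geo (l : ℝ) (hl : l < 0) : Summable fun k : ℕ => Real.exp l ^ (k+1) := by
  have := summable_geometric_of_lt_one (Real.exp_pos l).le (Real.exp_lt_one_iff.2 hl)
  exact (summable_nat_add_iff (f := fun k => Real.exp l ^ k) 1).2 this

lemma ser_summable (b : ℕ → ℝ) (hb : ∀ k, |b k| ≤ 1) (n : ℕ) (u : ℂ) (hu : u.re < 0) :
    Summable fun k : ℕ => (b k : ℂ) * Complex.exp (((k:ℂ)+1) * u) / ((k:ℂ)+1)^n :=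
  Summable.of_norm_bounded (summable_geo u.re hu) (fun k => ser_term_le' b hb n k u)

lemma summable_inv_kp1 (n : ℕ) (hn : 2 ≤ n) : Summable fun k : ℕ => 1 / ((k:ℝ)+1)^n := by
  have := (Real.summable_one_div_nat_pow (p := n)).2 (by omega)
  have := (summable_nat_add_iff (f := fun k : ℕ => 1 / ((k:ℝ))^n) 1).2 this
  simpa using this

lemma ser_term_le2 (b : ℕ → ℝ) (hb : ∀ k, |b k| ≤ 1) (n k : ℕ) (u : ℂ) (hu : u.re ≤ 0) :
    ‖(b k : ℂ) * Complex.exp (((k:ℂ)+1) * u) / ((k:ℂ)+1)^n‖ ≤ 1 / ((k:ℝ)+1)^n := by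
  refine (ser_term_le b hb n k u).trans ?_
  gcongr
  exact pow_le_one₀ (Real.exp_pos _).le (Real.exp_le_one_iff.2 hu)

lemma ser_summable2 (b : ℕ → ℝ) (hb : ∀ k, |b k| ≤ 1) (n : ℕ) (hn : 2 ≤ n) (u : ℂ) (hu : u.re ≤ 0) :
    Summable fun k : ℕ => (b k : ℂ) * Complex.exp (((k:ℂ)+1) * u) / ((k:ℂ)+1)^n :=
  Summable.of_norm_bounded (summable_inv_kp1 n hn) (fun k => ser_term_le2 b hb n k u hu)

lemma ser_cont (b : ℕ → ℝ) (hb : ∀ k, |b k| ≤ 1) (n : ℕ) (hn : 2 ≤ n) :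
    ContinuousOn (Ser b n) {u | u.re ≤ 0} := by
  refine continuousOn_tsum (fun k => ?_) (summable_inv_kp1 n hn)
    (fun k u hu => ser_term_le2 b hb n k u hu)
  fun_prop

lemma ser_bound (b : ℕ → ℝ) (hb : ∀ k, |b k| ≤ 1) (n j : ℕ) (u : ℂ) (hu : u.re < 0) :
    (-u.re)^(j+1) * ‖Ser b n u‖ ≤ (j+1).factorial := by
  have h1 : ‖Ser b n u‖ ≤ ∑' k : ℕ, Real.exp u.re ^ (k+1) :=
    tsum_of_norm_bounded (summable_geo u.re hu).hasSum (fun k => ser_term_le' b hb n k u)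
  have hx1 := Real.exp_lt_one_iff.2 hu
  have hx0 := Real.exp_pos u.re
  have h2 : ∑' k : ℕ, Real.exp u.re ^ (k+1) = Real.exp u.re / (1 - Real.exp u.re) := by
    simp_rw [pow_succ]
    rw [tsum_mul_right, tsum_geometric_of_lt_one hx0.le hx1]
    field_simp
  have h3 : (-u.re)^(j+1) / (j+1).factorial ≤ Real.exp (-u.re) - 1 := by
    have := Real.sum_le_exp_of_nonneg (x := -u.re) (by linarith) (j+2)
    rw [Finset.sum_range_succ, Finset.sum_range_succ'] at this
    have h5 : 0 ≤ ∑ i ∈ Finset.range j, (-u.re)^(i+1) / ((i+1).factorial:ℝ) := by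
      apply Finset.sum_nonneg
      intro i _
      have : 0 ≤ -u.re := by linarith
      positivity
    simp at this
    linarith
  have h4 : Real.exp u.re / (1 - Real.exp u.re) = 1 / (Real.exp (-u.re) - 1) := by
    rw [Real.exp_neg]
    have : (1:ℝ) - Real.exp u.re ≠ 0 := by linarith
    field_simp
  have h6 : 0 < Real.exp (-u.re) - 1 := by
    have := Real.add_one_lt_exp (x := -u.re) (by linarith)
    linarith
  have h7 : 0 ≤ (-u.re)^(j+1) := by
    have : 0 ≤ -u.re := by linarith
    positivity
  calc (-u.re)^(j+1) * ‖Ser b n u‖ ≤ (-u.re)^(j+1) * (1 / (Real.exp (-u.re) - 1)) := by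
        gcongr
        linarith
    _ ≤ (j+1).factorial := by
        rw [mul_one_div, div_le_iff₀ h6]
        rw [div_le_iff₀ (by positivity)] at h3
        linarith

lemma ser_deriv (b : ℕ → ℝ) (hb : ∀ k, |b k| ≤ 1) (n : ℕ) (u : ℂ) (hu : u.re < 0) :
    HasDerivAt (Ser b (n+1)) (Ser b n u) u := by
  have ho : IsOpen {v : ℂ | v.re < u.re/2} := isOpen_lt Complex.continuous_re continuous_const
  have hc : IsPreconnected {v : ℂ | v.re < u.re/2} := (convex_halfSpace_re_lt _).isPreconnected
  have hm : u ∈ {v : ℂ | v.re < u.re/2} := by simp; linarith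
  refine hasDerivAt_tsum_of_isPreconnected (summable_geo (u.re/2) (by linarith)) ho hc
    (g := fun (k:ℕ) v => (b k : ℂ) * Complex.exp (((k:ℂ)+1) * v) / ((k:ℂ)+1)^(n+1))
    (g' := fun (k:ℕ) v => (b k : ℂ) * Complex.exp (((k:ℂ)+1) * v) / ((k:ℂ)+1)^n) ?_ ?_ hm
    (ser_summable b hb _ u hu) hm
  · intro k v _
    have h1 : HasDerivAt (fun v : ℂ => ((k:ℂ)+1) * v) ((k:ℂ)+1) v := by
      simpa using (hasDerivAt_id v).const_mul ((k:ℂ)+1)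
    have h2 := ((h1.cexp).const_mul (b k : ℂ)).div_const (((k:ℂ)+1)^(n+1))
    refine h2.congr_deriv ?_
    have := kp1_ne k
    rw [pow_succ]
    field_simp
  · intro k v hv
    refine (ser_term_le' b hb n k v).trans ?_
    gcongr
    exact (le_of_lt hv)

/-- the point `l + iδ` -/
noncomputable def pt (l δ : ℝ) : ℂ := (l:ℂ) + (δ:ℂ) * Complex.I

@[simp] lemma pt_re (l δ : ℝ) : (pt l δ).re = l := by simp [pt]
@[simp] lemma pt_im (l δ : ℝ) : (pt l δ).im = δ := by simp [pt]

noncomputable def R2 (b : ℕ → ℝ) (l δ : ℝ) : ℂ := Ser b 2 (pt l δ) - l * Ser b 1 (pt l δ)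
noncomputable def R3 (b : ℕ → ℝ) (l δ : ℝ) : ℂ :=
  Ser b 3 (pt l δ) - l * Ser b 2 (pt l δ) + l^2/2 * Ser b 1 (pt l δ)
noncomputable def R4 (b : ℕ → ℝ) (l δ : ℝ) : ℂ :=
  Ser b 4 (pt l δ) - l * Ser b 3 (pt l δ) + l^2/2 * Ser b 2 (pt l δ) - l^3/6 * Ser b 1 (pt l δ)

section
variable {b : ℕ → ℝ} {l δ : ℝ → ℝ} {l' m t : ℝ}

lemma pt_deriv (h1 : HasDerivAt l l' t) (h2 : HasDerivAt δ m t) :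
    HasDerivAt (fun t => pt (l t) (δ t)) (pt l' m) t := by
  unfold pt
  exact h1.ofReal_comp.add (h2.ofReal_comp.mul_const _)

lemma ser_curve (hb : ∀ k, |b k| ≤ 1) (n : ℕ) (h0 : l t < 0) (h1 : HasDerivAt l l' t) (h2 : HasDerivAt δ m t) :
    HasDerivAt (fun t => Ser b (n+1) (pt (l t) (δ t))) (Ser b n (pt (l t) (δ t)) * pt l' m) t := by
  have h := ser_deriv b hb n (pt (l t) (δ t)) (by simpa)
  exact h.comp_of_eq t (pt_deriv h1 h2) rfl

lemma R2_deriv (hb : ∀ k, |b k| ≤ 1) (h0 : l t < 0) (h1 : HasDerivAt l l' t) (h2 : HasDerivAt δ m t) :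
    HasDerivAt (fun t => R2 b (l t) (δ t)) (Complex.I * m * Ser b 1 (pt (l t) (δ t))
      - l t * (Ser b 0 (pt (l t) (δ t)) * pt l' m)) t := by
  have e1 := ser_curve hb 1 h0 h1 h2
  have e0 := ser_curve hb 0 h0 h1 h2
  have hl := h1.ofReal_comp
  have := e1.sub (hl.mul e0)
  refine this.congr_deriv ?_
  simp only [pt]
  ring

lemma R3_deriv (hb : ∀ k, |b k| ≤ 1) (h0 : l t < 0) (h1 : HasDerivAt l l' t) (h2 : HasDerivAt δ m t) :
    HasDerivAt (fun t => R3 b (l t) (δ t)) (Complex.I * m * R2 b (l t) (δ t)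
      + (l t)^2/2 * (Ser b 0 (pt (l t) (δ t)) * pt l' m)) t := by
  have e2 := ser_curve hb 2 h0 h1 h2
  have e1 := ser_curve hb 1 h0 h1 h2
  have e0 := ser_curve hb 0 h0 h1 h2
  have hl := h1.ofReal_comp
  have := (e2.sub (hl.mul e1)).add (((hl.pow 2).div_const 2).mul e0)
  refine this.congr_deriv ?_
  simp only [pt, R2, Pi.pow_apply]
  push_cast
  ring

lemma R4_deriv (hb : ∀ k, |b k| ≤ 1) (h0 : l t < 0) (h1 : HasDerivAt l l' t) (h2 : HasDerivAt δ m t) :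
    HasDerivAt (fun t => R4 b (l t) (δ t)) (Complex.I * m * R3 b (l t) (δ t)
      - (l t)^3/6 * (Ser b 0 (pt (l t) (δ t)) * pt l' m)) t := by
  have e3 := ser_curve hb 3 h0 h1 h2
  have e2 := ser_curve hb 2 h0 h1 h2
  have e1 := ser_curve hb 1 h0 h1 h2
  have e0 := ser_curve hb 0 h0 h1 h2
  have hl := h1.ofReal_comp
  have := ((e3.sub (hl.mul e2)).add (((hl.pow 2).div_const 2).mul e1)).sub
    (((hl.pow 3).div_const 6).mul e0)
  refine this.congr_deriv ?_
  simp only [pt, R3, Pi.pow_apply]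
  push_cast
  ring

end


section
variable {b : ℕ → ℝ}

lemma ser_bound_pt (hb : ∀ k, |b k| ≤ 1) (n j : ℕ) (l δ : ℝ) (hl : l < 0) :
    (-l)^(j+1) * ‖Ser b n (pt l δ)‖ ≤ (j+1).factorial := by
  simpa using ser_bound b hb n j (pt l δ) (by simpa)

lemma R4_bound (hb : ∀ k, |b k| ≤ 1) (l δ : ℝ) (hl : l < 0) : ‖R4 b l δ‖ ≤ 10 / (-l) := by
  have hl' : 0 < -l := by linarith
  rw [le_div_iff₀ hl']
  have a4 := ser_bound_pt hb 4 0 l δ hl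
  have a3 := ser_bound_pt hb 3 1 l δ hl
  have a2 := ser_bound_pt hb 2 2 l δ hl
  have a1 := ser_bound_pt hb 1 3 l δ hl
  simp [Nat.factorial] at a1 a2 a3 a4
  have : ‖R4 b l δ‖ ≤ ‖Ser b 4 (pt l δ)‖ + ‖(l:ℂ) * Ser b 3 (pt l δ)‖ + ‖(l:ℂ)^2/2 * Ser b 2 (pt l δ)‖
      + ‖(l:ℂ)^3/6 * Ser b 1 (pt l δ)‖ := by
    unfold R4
    refine (norm_sub_le _ _).trans ?_
    gcongr
    refine (norm_add_le _ _).trans ?_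
    gcongr
    exact norm_sub_le _ _
  simp only [norm_mul, norm_div, norm_pow, Complex.norm_real, Real.norm_eq_abs, abs_of_neg hl] at this
  norm_num at this
  nlinarith [mul_le_mul_of_nonneg_right this hl'.le]

lemma R3_bound (hb : ∀ k, |b k| ≤ 1) (l δ : ℝ) (hl : l < 0) : ‖R3 b l δ‖ ≤ 10 / (-l) := by
  have hl' : 0 < -l := by linarith
  rw [le_div_iff₀ hl']
  have a3 := ser_bound_pt hb 3 0 l δ hl
  have a2 := ser_bound_pt hb 2 1 l δ hl
  have a1 := ser_bound_pt hb 1 2 l δ hl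
  simp [Nat.factorial] at a1 a2 a3
  have : ‖R3 b l δ‖ ≤ ‖Ser b 3 (pt l δ)‖ + ‖(l:ℂ) * Ser b 2 (pt l δ)‖ + ‖(l:ℂ)^2/2 * Ser b 1 (pt l δ)‖ := by
    unfold R3
    refine (norm_add_le _ _).trans ?_
    gcongr
    exact norm_sub_le _ _
  simp only [norm_mul, norm_div, norm_pow, Complex.norm_real, Real.norm_eq_abs, abs_of_neg hl] at this
  norm_num at this
  nlinarith [mul_le_mul_of_nonneg_right this hl'.le]

lemma R2_bound (hb : ∀ k, |b k| ≤ 1) (l δ : ℝ) (hl : l < 0) : ‖R2 b l δ‖ ≤ 10 / (-l) := by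
  have hl' : 0 < -l := by linarith
  rw [le_div_iff₀ hl']
  have a2 := ser_bound_pt hb 2 0 l δ hl
  have a1 := ser_bound_pt hb 1 1 l δ hl
  simp [Nat.factorial] at a1 a2
  have : ‖R2 b l δ‖ ≤ ‖Ser b 2 (pt l δ)‖ + ‖(l:ℂ) * Ser b 1 (pt l δ)‖ := by
    unfold R2
    exact norm_sub_le _ _
  simp only [norm_mul, norm_div, norm_pow, Complex.norm_real, Real.norm_eq_abs, abs_of_neg hl] at this
  nlinarith [mul_le_mul_of_nonneg_right this hl'.le]

lemma tendsto_zero_of_bound {F : Filter ℝ} {l : ℝ → ℝ} {f : ℝ → ℂ} (hl : Tendsto l F atBot)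
    (h : ∀ t, l t < 0 → ‖f t‖ ≤ 10 / (-l t)) : Tendsto f F (𝓝 0) := by
  rw [tendsto_zero_iff_norm_tendsto_zero]
  have h1 : Tendsto (fun t => 10 / (-l t)) F (𝓝 0) :=
    (tendsto_neg_atBot_atTop.comp hl).const_div_atTop 10
  refine squeeze_zero' (Eventually.of_forall fun t => norm_nonneg _) ?_ h1
  filter_upwards [hl.eventually (eventually_lt_atBot 0)] with t ht using h t ht

lemma ser_tendsto (hb : ∀ k, |b k| ≤ 1) (n : ℕ) (hn : 2 ≤ n) {F : Filter ℝ} {l δ : ℝ → ℝ} {l0 δ0 : ℝ} (hl0 : l0 ≤ 0)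
    (hl : Tendsto l F (𝓝 l0)) (hneg : ∀ᶠ t in F, l t < 0) (hδ : Tendsto δ F (𝓝 δ0)) :
    Tendsto (fun t => Ser b n (pt (l t) (δ t))) F (𝓝 (Ser b n (pt l0 δ0))) := by
  have hc := ser_cont b hb n hn (pt l0 δ0) (by simpa)
  refine hc.tendsto.comp (tendsto_nhdsWithin_iff.2 ⟨?_, ?_⟩)
  · unfold pt
    exact ((Complex.continuous_ofReal.tendsto _).comp hl).add
      (((Complex.continuous_ofReal.tendsto _).comp hδ).mul_const _)
  · filter_upwards [hneg] with t ht
    simpa using ht.le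

lemma lS1_tendsto (hb : ∀ k, |b k| ≤ 1) {F : Filter ℝ} {l δ : ℝ → ℝ} 
    (hl : Tendsto l F (𝓝 0)) (hneg : ∀ᶠ t in F, l t < 0) :
    Tendsto (fun t => (l t : ℂ)^2 * Ser b 1 (pt (l t) (δ t))) F (𝓝 0) := by
  rw [tendsto_zero_iff_norm_tendsto_zero]
  have h1 : Tendsto (fun t => -l t) F (𝓝 0) := by simpa using hl.neg
  refine squeeze_zero' (Eventually.of_forall fun t => norm_nonneg _) ?_ h1
  filter_upwards [hneg] with t ht
  have a1 := ser_bound_pt hb 1 0 (l t) (δ t) ht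
  simp only [norm_mul, norm_pow, Complex.norm_real, Real.norm_eq_abs, abs_of_neg ht]
  simp at a1
  nlinarith

lemma R3_tendsto (hb : ∀ k, |b k| ≤ 1) {F : Filter ℝ} {l δ : ℝ → ℝ} {δ0 : ℝ} 
    (hl : Tendsto l F (𝓝 0)) (hneg : ∀ᶠ t in F, l t < 0) (hδ : Tendsto δ F (𝓝 δ0)) :
    Tendsto (fun t => R3 b (l t) (δ t)) F (𝓝 (R3 b 0 δ0)) := by
  have h3 := ser_tendsto hb 3 (by norm_num) le_rfl hl hneg hδ
  have h2 := ser_tendsto hb 2 (by norm_num) le_rfl hl hneg hδ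
  have h1 := lS1_tendsto hb (δ := δ) hl hneg
  have hl' := (Complex.continuous_ofReal.tendsto _).comp hl
  have := (h3.sub (hl'.mul h2)).add (h1.div_const 2)
  unfold R3
  convert! this using 2
  · simp; ring
  · simp

lemma R4_tendsto (hb : ∀ k, |b k| ≤ 1) {F : Filter ℝ} {l δ : ℝ → ℝ} {δ0 : ℝ} 
    (hl : Tendsto l F (𝓝 0)) (hneg : ∀ᶠ t in F, l t < 0) (hδ : Tendsto δ F (𝓝 δ0)) :
    Tendsto (fun t => R4 b (l t) (δ t)) F (𝓝 (R4 b 0 δ0)) := by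
  have h4 := ser_tendsto hb 4 (by norm_num) le_rfl hl hneg hδ
  have h3 := ser_tendsto hb 3 (by norm_num) le_rfl hl hneg hδ
  have h2 := ser_tendsto hb 2 (by norm_num) le_rfl hl hneg hδ
  have h1 := lS1_tendsto hb (δ := δ) hl hneg
  have hl' := (Complex.continuous_ofReal.tendsto _).comp hl
  have := ((h4.sub (hl'.mul h3)).add (((hl'.pow 2).div_const 2).mul h2)).sub ((hl'.mul h1).div_const 6)
  unfold R4
  convert! this using 2
  · simp; ring
  · simp
end

/-- constant sequence one -/
def oneS : ℕ → ℝ := fun _ => 1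
lemma oneS_le : ∀ k, |oneS k| ≤ 1 := by intro k; simp [oneS]

lemma norm_exp_lt {u : ℂ} (hu : u.re < 0) : ‖Complex.exp u‖ < 1 := by
  rw [Complex.norm_exp]; exact Real.exp_lt_one_iff.2 hu

lemma L0_eq {u : ℂ} (hu : u.re < 0) : Ser oneS 0 u = Complex.exp u / (1 - Complex.exp u) := by
  unfold Ser
  have h : ∀ k : ℕ, ((oneS k:ℝ) : ℂ) * Complex.exp (((k:ℂ)+1) * u) / ((k:ℂ)+1)^0
      = Complex.exp u ^ k * Complex.exp u := by
    intro k
    rw [← pow_succ, ← Complex.exp_nat_mul]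
    simp [oneS]
  simp_rw [h]
  rw [tsum_mul_right, tsum_geometric_of_norm_lt_one (norm_exp_lt hu), inv_mul_eq_div]

lemma L1_eq {u : ℂ} (hu : u.re < 0) : Ser oneS 1 u = - Complex.log (1 - Complex.exp u) := by
  unfold Ser
  rw [← (Complex.hasSum_taylorSeries_neg_log' (norm_exp_lt hu)).tsum_eq]
  congr 1
  ext k
  rw [← Complex.exp_nat_mul]
  simp [oneS]

lemma one_sub_ne {u : ℂ} (hu : u.re < 0) : 1 - Complex.exp u ≠ 0 := by
  intro h
  have : Complex.exp u = 1 := by linear_combination -h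
  have h2 := norm_exp_lt hu
  rw [this] at h2
  simp at h2

lemma exp_pt (l δ : ℝ) : Complex.exp (pt l δ) =
    ((Real.exp l * Real.cos δ : ℝ) : ℂ) + ((Real.exp l * Real.sin δ : ℝ) : ℂ) * Complex.I := by
  unfold pt
  rw [Complex.exp_add, Complex.exp_mul_I]
  push_cast
  ring

lemma L0_val {l δ p q A B : ℝ} (hl : l < 0) (hA : Real.exp l * Real.cos δ = A)
    (hB : Real.exp l * Real.sin δ = B) (h1 : A = p*(1-A) + q*B) (h2 : B = q*(1-A) - p*B) :
    Ser oneS 0 (pt l δ) = pt p q := by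
  have hu : (pt l δ).re < 0 := by simpa
  rw [L0_eq hu, div_eq_iff (one_sub_ne hu), exp_pt, hA, hB]
  apply Complex.ext
  · simp [pt]; linarith
  · simp [pt]; linarith

lemma L1_re_val {l δ A B N : ℝ} (hl : l < 0) (hN : 0 < N) (hA : Real.exp l * Real.cos δ = A)
    (hB : Real.exp l * Real.sin δ = B) (h : (1-A)^2 + B^2 = N^2) :
    (Ser oneS 1 (pt l δ)).re = - Real.log N := by
  have hu : (pt l δ).re < 0 := by simpa
  rw [L1_eq hu, Complex.neg_re, Complex.log_re, exp_pt, hA, hB]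
  congr 2
  rw [Complex.norm_eq_sqrt_sq_add_sq]
  simp
  rw [h, Real.sqrt_sq hN.le]

noncomputable def q2 (l δ : ℝ) : ℝ := (R2 oneS l δ).im
noncomputable def q3 (l δ : ℝ) : ℝ := (R3 oneS l δ).re
noncomputable def q4 (l δ : ℝ) : ℝ := (R4 oneS l δ).im

lemma HasDerivAt.cim {f : ℝ → ℂ} {f' : ℂ} {t : ℝ} (h : HasDerivAt f f' t) :
    HasDerivAt (fun t => (f t).im) f'.im t := Complex.imCLM.hasFDerivAt.comp_hasDerivAt t h
lemma HasDerivAt.cre {f : ℝ → ℂ} {f' : ℂ} {t : ℝ} (h : HasDerivAt f f' t) :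
    HasDerivAt (fun t => (f t).re) f'.re t := Complex.reCLM.hasFDerivAt.comp_hasDerivAt t h

section
variable {l δ : ℝ → ℝ} {l' m t p q : ℝ}

lemma q4_deriv (h0 : l t < 0) (h1 : HasDerivAt l l' t) (h2 : HasDerivAt δ m t)
    (hS : Ser oneS 0 (pt (l t) (δ t)) = pt p q) :
    HasDerivAt (fun t => q4 (l t) (δ t)) (m * q3 (l t) (δ t) - (l t)^3/6 * (p * m + q * l')) t := by
  refine (R4_deriv oneS_le h0 h1 h2).cim.congr_deriv ?_
  rw [hS]
  have : ((l t : ℂ))^3/6 = (((l t)^3/6 : ℝ) : ℂ) := by push_cast; rfl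
  rw [this]
  simp only [Complex.sub_im, Complex.mul_im, Complex.mul_re, Complex.ofReal_re, Complex.ofReal_im, pt_re, pt_im, Complex.I_re, Complex.I_im, q3]
  ring

lemma q3_deriv (h0 : l t < 0) (h1 : HasDerivAt l l' t) (h2 : HasDerivAt δ m t)
    (hS : Ser oneS 0 (pt (l t) (δ t)) = pt p q) :
    HasDerivAt (fun t => q3 (l t) (δ t)) (- m * q2 (l t) (δ t) + (l t)^2/2 * (p * l' - q * m)) t := by
  refine (R3_deriv oneS_le h0 h1 h2).cre.congr_deriv ?_
  rw [hS]
  have : ((l t : ℂ))^2/2 = (((l t)^2/2 : ℝ) : ℂ) := by push_cast; rfl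
  rw [this]
  simp only [Complex.add_re, Complex.mul_im, Complex.mul_re, Complex.ofReal_re, Complex.ofReal_im, pt_re, pt_im, Complex.I_re, Complex.I_im, q2]
  ring

lemma q2_deriv {N : ℝ} (h0 : l t < 0) (h1 : HasDerivAt l l' t) (h2 : HasDerivAt δ m t)
    (hS : Ser oneS 0 (pt (l t) (δ t)) = pt p q) (hS1 : (Ser oneS 1 (pt (l t) (δ t))).re = N) :
    HasDerivAt (fun t => q2 (l t) (δ t)) (m * N - l t * (p * m + q * l')) t := by
  refine (R2_deriv oneS_le h0 h1 h2).cim.congr_deriv ?_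
  rw [hS]
  simp only [Complex.sub_im, Complex.mul_im, Complex.mul_re, Complex.ofReal_re, Complex.ofReal_im, pt_re, pt_im, Complex.I_re, Complex.I_im, hS1]
  ring
end

section
variable {F : Filter ℝ} {l δ : ℝ → ℝ} {δ0 : ℝ} 
lemma q4_bot (hl : Tendsto l F atBot) : Tendsto (fun t => q4 (l t) (δ t)) F (𝓝 0) :=
  (Complex.continuous_im.tendsto 0).comp (tendsto_zero_of_bound hl (fun t ht => R4_bound oneS_le _ (δ t) ht))
lemma q3_bot (hl : Tendsto l F atBot) : Tendsto (fun t => q3 (l t) (δ t)) F (𝓝 0) :=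
  (Complex.continuous_re.tendsto 0).comp (tendsto_zero_of_bound hl (fun t ht => R3_bound oneS_le _ (δ t) ht))
lemma q2_bot (hl : Tendsto l F atBot) : Tendsto (fun t => q2 (l t) (δ t)) F (𝓝 0) :=
  (Complex.continuous_im.tendsto 0).comp (tendsto_zero_of_bound hl (fun t ht => R2_bound oneS_le _ (δ t) ht))
lemma q4_lim (hl : Tendsto l F (𝓝 0)) (hneg : ∀ᶠ t in F, l t < 0) (hδ : Tendsto δ F (𝓝 δ0)) :
    Tendsto (fun t => q4 (l t) (δ t)) F (𝓝 (q4 0 δ0)) :=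
  (Complex.continuous_im.tendsto _).comp (R4_tendsto oneS_le hl hneg hδ)
lemma q3_lim (hl : Tendsto l F (𝓝 0)) (hneg : ∀ᶠ t in F, l t < 0) (hδ : Tendsto δ F (𝓝 δ0)) :
    Tendsto (fun t => q3 (l t) (δ t)) F (𝓝 (q3 0 δ0)) :=
  (Complex.continuous_re.tendsto _).comp (R3_tendsto oneS_le hl hneg hδ)
end


lemma circ_deriv (n : ℕ) (hn : 1 ≤ n) (t : ℝ) (v : ℂ)
    (h : Tendsto (Ser oneS n) (𝓝[{u : ℂ | u.re < 0}] (pt 0 t)) (𝓝 v)) :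
    HasDerivAt (fun t => Ser oneS (n+1) (pt 0 t)) (v * Complex.I) t := by
  have hcl : closure {u : ℂ | u.re < 0} = {u | u.re ≤ 0} := Complex.closure_setOfPred_re_lt 0
  have key : HasFDerivWithinAt (Ser oneS (n+1))
      ((ContinuousLinearMap.toSpanSingleton ℂ v).restrictScalars ℝ) (closure {u : ℂ | u.re < 0}) (pt 0 t) := by
    apply hasFDerivWithinAt_closure_of_tendsto_fderiv
    · intro u hu
      exact ((ser_deriv oneS oneS_le n u hu).hasFDerivAt.restrictScalars ℝ).differentiableAt.differentiableWithinAt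
    · exact convex_halfSpace_re_lt 0
    · exact isOpen_lt Complex.continuous_re continuous_const
    · intro y hy
      rw [hcl] at hy
      exact (ser_cont oneS oneS_le (n+1) (by omega) y hy).mono (fun z (hz : z.re < 0) => (show z.re ≤ 0 from hz.le))
    · have h2 : Tendsto (fun u => (ContinuousLinearMap.toSpanSingleton ℂ (Ser oneS n u)).restrictScalars ℝ)
          (𝓝[{u : ℂ | u.re < 0}] (pt 0 t)) (𝓝 ((ContinuousLinearMap.toSpanSingleton ℂ v).restrictScalars ℝ)) := by
        have hc : Continuous (fun w : ℂ => (ContinuousLinearMap.toSpanSingleton ℂ w).restrictScalars ℝ) := by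
          have : (fun w : ℂ => (ContinuousLinearMap.toSpanSingleton ℂ w).restrictScalars ℝ)
            = fun w : ℂ => ContinuousLinearMap.mul ℝ ℂ w := by
            ext w x
            simp [mul_comm]
          rw [this]
          exact (ContinuousLinearMap.mul ℝ ℂ).continuous
        exact (hc.tendsto v).comp h
      refine h2.congr' ?_
      filter_upwards [self_mem_nhdsWithin] with u hu
      exact ((ser_deriv oneS oneS_le n u hu).hasFDerivAt.restrictScalars ℝ).fderiv.symm
  have hp : HasDerivWithinAt (fun t : ℝ => pt 0 t) Complex.I Set.univ t := by
    have := pt_deriv (hasDerivAt_const t (0:ℝ)) (hasDerivAt_id t)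
    have h2 := this.hasDerivWithinAt (s := Set.univ)
    refine h2.congr_deriv ?_
    simp [pt]
  have := key.comp_hasDerivWithinAt t hp (by intro s _; rw [hcl]; simp)
  rw [hasDerivWithinAt_univ] at this
  refine this.congr_deriv ?_
  simp [mul_comm]

lemma q40 (t : ℝ) : q4 0 t = (Ser oneS 4 (pt 0 t)).im := by simp [q4, R4]
lemma q30 (t : ℝ) : q3 0 t = (Ser oneS 3 (pt 0 t)).re := by simp [q3, R3]
lemma q20 (t : ℝ) : q2 0 t = (Ser oneS 2 (pt 0 t)).im := by simp [q2, R2]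

lemma c4_deriv (t : ℝ) : HasDerivAt (fun t => q4 0 t) (q3 0 t) t := by
  simp only [q40, q30]
  refine (circ_deriv 3 (by norm_num) t (Ser oneS 3 (pt 0 t)) ?_).cim.congr_deriv ?_
  · exact (ser_cont oneS oneS_le 3 (by norm_num) (pt 0 t) (by simp)).mono (fun z (hz : z.re < 0) => (show z.re ≤ 0 from hz.le))
  · simp

lemma c3_deriv (t : ℝ) : HasDerivAt (fun t => q3 0 t) (-q2 0 t) t := by
  simp only [q20, q30]
  refine (circ_deriv 2 (by norm_num) t (Ser oneS 2 (pt 0 t)) ?_).cre.congr_deriv ?_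
  · exact (ser_cont oneS oneS_le 2 (by norm_num) (pt 0 t) (by simp)).mono (fun z (hz : z.re < 0) => (show z.re ≤ 0 from hz.le))
  · simp

lemma c2_deriv (t N : ℝ) (hN : 0 < N) (h : N^2 = 2 - 2 * Real.cos t) :
    HasDerivAt (fun t => q2 0 t) (- Real.log N) t := by
  simp only [q20]
  have hcos : Real.cos t < 1 := by nlinarith [pow_pos hN 2]
  have hs : 1 - Complex.exp (pt 0 t) ∈ Complex.slitPlane := by
    left
    rw [exp_pt, Complex.sub_re, Complex.add_re, Complex.re_ofReal_mul, Complex.ofReal_re]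
    simpa using hcos
  refine (circ_deriv 1 (by norm_num) t (-Complex.log (1 - Complex.exp (pt 0 t))) ?_).cim.congr_deriv ?_
  · have hc : ContinuousAt (fun u => -Complex.log (1 - Complex.exp u)) (pt 0 t) := by
      refine ContinuousAt.neg (ContinuousAt.clog ?_ hs)
      fun_prop
    refine (hc.tendsto.mono_left nhdsWithin_le_nhds).congr' ?_
    filter_upwards [self_mem_nhdsWithin] with u hu
    exact (L1_eq hu).symm
  · simp only [Complex.mul_im, Complex.I_re, Complex.I_im, Complex.neg_re, Complex.log_re]
    simp only [mul_one, mul_zero, add_zero, zero_add]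
    congr 2
    rw [exp_pt, Complex.norm_eq_sqrt_sq_add_sq, ← Real.sqrt_sq hN.le]
    congr 1
    rw [Complex.sub_re, Complex.add_re, Complex.re_ofReal_mul, Complex.ofReal_re,
      Complex.sub_im, Complex.add_im, Complex.im_ofReal_mul, Complex.ofReal_im]
    simp only [Real.exp_zero, Complex.one_re, Complex.one_im, Complex.I_re, Complex.I_im]
    nlinarith [Real.sin_sq_add_cos_sq t]

/-! symmetries -/
lemma ser_per (n : ℕ) (l δ : ℝ) : Ser oneS n (pt l (δ + 2 * Real.pi)) = Ser oneS n (pt l δ) := by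
  unfold Ser
  congr 1
  ext k
  have : ((k:ℂ)+1) * pt l (δ + 2*Real.pi) = ((k:ℂ)+1) * pt l δ + ((k+1:ℕ):ℂ) * (2 * Real.pi * Complex.I) := by
    unfold pt; push_cast; ring
  rw [this, Complex.exp_add, Complex.exp_nat_mul_two_pi_mul_I, mul_one]

lemma ser_conj (n : ℕ) (l δ : ℝ) : Ser oneS n (pt l (-δ)) = (starRingEnd ℂ) (Ser oneS n (pt l δ)) := by
  unfold Ser
  rw [Complex.conj_tsum]
  congr 1
  ext k
  simp [pt, ← Complex.exp_conj]

lemma q4_per (l δ : ℝ) : q4 l (δ + 2 * Real.pi) = q4 l δ := by simp [q4, R4, ser_per]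
lemma q3_per (l δ : ℝ) : q3 l (δ + 2 * Real.pi) = q3 l δ := by simp [q3, R3, ser_per]
lemma q2_per (l δ : ℝ) : q2 l (δ + 2 * Real.pi) = q2 l δ := by simp [q2, R2, ser_per]

lemma R4_conj (l δ : ℝ) : R4 oneS l (-δ) = (starRingEnd ℂ) (R4 oneS l δ) := by
  simp [R4, ser_conj, Complex.conj_ofNat]
lemma R3_conj (l δ : ℝ) : R3 oneS l (-δ) = (starRingEnd ℂ) (R3 oneS l δ) := by
  simp [R3, ser_conj, Complex.conj_ofNat]
lemma R2_conj (l δ : ℝ) : R2 oneS l (-δ) = (starRingEnd ℂ) (R2 oneS l δ) := by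
  simp [R2, ser_conj]
lemma q4_neg (l δ : ℝ) : q4 l (-δ) = - q4 l δ := by simp [q4, R4_conj]
lemma q3_neg (l δ : ℝ) : q3 l (-δ) = q3 l δ := by simp [q3, R3_conj]
lemma q2_neg (l δ : ℝ) : q2 l (-δ) = - q2 l δ := by simp [q2, R2_conj]

lemma ser_dup (n : ℕ) (l δ : ℝ)
    (hs : ∀ δ, Summable fun k : ℕ => ((oneS k:ℝ) : ℂ) * Complex.exp (((k:ℂ)+1) * pt l δ) / ((k:ℂ)+1)^n) :
    Ser oneS n (pt l δ) + Ser oneS n (pt l (δ + Real.pi)) = 2 / 2^n * Ser oneS n (pt (2*l) (2*δ)) := by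
  unfold Ser
  rw [← (hs _).tsum_add (hs _), ← tsum_mul_left]
  have hinj : Function.Injective (fun j : ℕ => 2*j+1) := by intro a b h; simpa using h
  have hfac : ∀ k : ℕ, Complex.exp (((k:ℂ)+1) * pt l (δ + Real.pi))
      = Complex.exp (((k:ℂ)+1) * pt l δ) * (-1)^(k+1) := by
    intro k
    rw [← Complex.exp_pi_mul_I, ← Complex.exp_nat_mul, ← Complex.exp_add]
    congr 1
    unfold pt; push_cast; ring
  rw [← hinj.tsum_eq]
  · congr 1
    ext j
    rw [hfac]
    have h1 : ((2*j+1 : ℕ) : ℂ) + 1 = 2 * ((j:ℂ)+1) := by push_cast; ring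
    have h2 : ((-1:ℂ))^(2*j+1+1) = 1 := by rw [show 2*j+1+1 = 2*(j+1) by ring, pow_mul]; simp
    have h3 : 2 * ((j:ℂ)+1) * pt l δ = ((j:ℂ)+1) * pt (2*l) (2*δ) := by unfold pt; push_cast; ring
    rw [h1, h2, h3, mul_pow]
    simp only [oneS]
    have := kp1_ne j
    push_cast
    field_simp
    ring
  · intro k hk
    rcases Nat.even_or_odd k with he | ho
    · exfalso
      apply hk
      simp only [hfac]
      rw [(he.add_one).neg_one_pow]
      ring
    · obtain ⟨j, hj⟩ := ho
      exact ⟨j, hj.symm⟩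

lemma ser_trip (n : ℕ) (l δ : ℝ)
    (hs : ∀ δ, Summable fun k : ℕ => ((oneS k:ℝ) : ℂ) * Complex.exp (((k:ℂ)+1) * pt l δ) / ((k:ℂ)+1)^n) :
    Ser oneS n (pt l δ) + Ser oneS n (pt l (δ + 2*Real.pi/3)) + Ser oneS n (pt l (δ + 4*Real.pi/3))
      = 3 / 3^n * Ser oneS n (pt (3*l) (3*δ)) := by
  unfold Ser
  rw [← (hs _).tsum_add (hs _), ← ((hs _).add (hs _)).tsum_add (hs _), ← tsum_mul_left]
  have hinj : Function.Injective (fun j : ℕ => 3*j+2) := by intro a b h; simpa using h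
  set w : ℂ := Complex.exp (2 * Real.pi * Complex.I / 3) with hw
  have hw3 : w^3 = 1 := by
    rw [hw, ← Complex.exp_nat_mul, ← Complex.exp_two_pi_mul_I]
    congr 1
    push_cast; ring
  have hw1 : w ≠ 1 := by
    intro h
    have h' := congrArg Complex.re h
    rw [hw, show (2 * Real.pi * Complex.I / 3 : ℂ) = ((2*Real.pi/3 : ℝ) : ℂ) * Complex.I by push_cast; ring,
      Complex.exp_ofReal_mul_I_re, show 2*Real.pi/3 = Real.pi - Real.pi/3 by ring, Real.cos_pi_sub] at h'
    norm_num at h'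
  have hw2 : w^2 + w + 1 = 0 := by
    have : (w - 1) * (w^2 + w + 1) = 0 := by linear_combination hw3
    rcases mul_eq_zero.1 this with h | h
    · exact absurd (sub_eq_zero.1 h) hw1
    · exact h
  have hfac : ∀ k : ℕ, Complex.exp (((k:ℂ)+1) * pt l (δ + 2*Real.pi/3))
      = Complex.exp (((k:ℂ)+1) * pt l δ) * w^(k+1) := by
    intro k
    rw [hw, ← Complex.exp_nat_mul, ← Complex.exp_add]
    congr 1
    unfold pt; push_cast; ring
  have hfac2 : ∀ k : ℕ, Complex.exp (((k:ℂ)+1) * pt l (δ + 4*Real.pi/3))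
      = Complex.exp (((k:ℂ)+1) * pt l δ) * (w^(k+1))^2 := by
    intro k
    rw [hw, ← Complex.exp_nat_mul, ← Complex.exp_nat_mul, ← Complex.exp_add]
    congr 1
    unfold pt; push_cast; ring
  rw [← hinj.tsum_eq]
  · congr 1
    ext j
    rw [hfac, hfac2]
    have h1 : ((3*j+2 : ℕ) : ℂ) + 1 = 3 * ((j:ℂ)+1) := by push_cast; ring
    have h2 : w^(3*j+2+1) = 1 := by rw [show 3*j+2+1 = 3*(j+1) by ring, pow_mul, hw3]; simp
    have h3 : 3 * ((j:ℂ)+1) * pt l δ = ((j:ℂ)+1) * pt (3*l) (3*δ) := by unfold pt; push_cast; ring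
    rw [h1, h2, h3, mul_pow]
    simp only [oneS]
    have := kp1_ne j
    push_cast
    field_simp
    ring
  · intro k hk
    have h3 : k % 3 = 0 ∨ k % 3 = 1 ∨ k % 3 = 2 := by omega
    have hbad : (w^(k+1))^2 + w^(k+1) + 1 = 0 → False := by
      intro h
      apply hk
      simp only [hfac, hfac2]
      linear_combination (((oneS k:ℝ) : ℂ) * Complex.exp (((k:ℂ)+1) * pt l δ) / ((k:ℂ)+1)^n) * h
    rcases h3 with h | h | h
    · exfalso
      apply hbad
      rw [show k + 1 = 3 * (k/3) + 1 by omega, pow_add, pow_mul, hw3]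
      simp only [one_pow, one_mul, pow_one]
      exact hw2
    · exfalso
      apply hbad
      rw [show k + 1 = 3 * (k/3) + 2 by omega, pow_add, pow_mul, hw3]
      simp only [one_pow, one_mul]
      linear_combination w * hw3 + hw2
    · exact ⟨k/3, by simp only; omega⟩

lemma q4_dup (l δ : ℝ) (hl : l < 0) : q4 l δ + q4 l (δ + Real.pi) = q4 (2*l) (2*δ) / 8 := by
  have h := fun n => ser_dup n l δ (fun δ => ser_summable oneS oneS_le n _ (by simpa))
  unfold q4
  rw [← Complex.add_im]
  have : R4 oneS l δ + R4 oneS l (δ + Real.pi) = ((1/8 : ℝ) : ℂ) * R4 oneS (2*l) (2*δ) := by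
    unfold R4
    have h4 := h 4
    have h3 := h 3
    have h2 := h 2
    have h1 := h 1
    push_cast
    linear_combination h4 - l * h3 + l^2/2 * h2 - l^3/6*h1
  rw [this]
  rw [Complex.im_ofReal_mul]; ring

lemma c4_dup (δ : ℝ) : q4 0 δ + q4 0 (δ + Real.pi) = q4 0 (2*δ) / 8 := by
  have h := ser_dup 4 0 δ (fun δ => ser_summable2 oneS oneS_le 4 (by norm_num) _ (by simp))
  simp only [q40]
  rw [← Complex.add_im, h, mul_zero, show ((2:ℂ)/2^4) = ((1/8:ℝ):ℂ) by push_cast; norm_num, Complex.im_ofReal_mul]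
  ring

lemma c3_dup (δ : ℝ) : q3 0 δ + q3 0 (δ + Real.pi) = q3 0 (2*δ) / 4 := by
  have h := ser_dup 3 0 δ (fun δ => ser_summable2 oneS oneS_le 3 (by norm_num) _ (by simp))
  simp only [q30]
  rw [← Complex.add_re, h, mul_zero, show ((2:ℂ)/2^3) = ((1/4:ℝ):ℂ) by push_cast; norm_num, Complex.re_ofReal_mul]
  ring

lemma c4_trip (δ : ℝ) : q4 0 δ + q4 0 (δ + 2*Real.pi/3) + q4 0 (δ + 4*Real.pi/3) = q4 0 (3*δ) / 27 := by
  have h := ser_trip 4 0 δ (fun δ => ser_summable2 oneS oneS_le 4 (by norm_num) _ (by simp))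
  simp only [q40]
  rw [← Complex.add_im, ← Complex.add_im, h, mul_zero, show ((3:ℂ)/3^4) = ((1/27:ℝ):ℂ) by push_cast; norm_num, Complex.im_ofReal_mul]
  ring

lemma c3_trip (δ : ℝ) : q3 0 δ + q3 0 (δ + 2*Real.pi/3) + q3 0 (δ + 4*Real.pi/3) = q3 0 (3*δ) / 9 := by
  have h := ser_trip 3 0 δ (fun δ => ser_summable2 oneS oneS_le 3 (by norm_num) _ (by simp))
  simp only [q30]
  rw [← Complex.add_re, ← Complex.add_re, h, mul_zero, show ((3:ℂ)/3^3) = ((1/9:ℝ):ℂ) by push_cast; norm_num, Complex.re_ofReal_mul]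
  ring

/-! special values -/
lemma c3_zero : q3 0 0 = zeta 3 := by
  have : Ser oneS 3 (pt 0 0) = ((zeta 3 : ℝ) : ℂ) := by
    unfold Ser zeta
    rw [Complex.ofReal_tsum]
    congr 1
    ext k
    simp [oneS, pt]
  rw [q30, this, Complex.ofReal_re]

lemma c3_pi : q3 0 Real.pi = -3/4 * zeta 3 := by
  have := c3_dup 0
  simp only [zero_add, mul_zero, c3_zero] at this
  linarith

lemma c3_two : q3 0 (2*Real.pi/3) = -4/9 * zeta 3 := by
  have := c3_trip 0
  simp only [zero_add, mul_zero, c3_zero] at this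
  have h2 : q3 0 (4*Real.pi/3) = q3 0 (2*Real.pi/3) := by
    rw [← q3_neg 0 (2*Real.pi/3), ← q3_per 0 (-(2*Real.pi/3))]
    congr 1; ring
  linarith

lemma c3_one : q3 0 (Real.pi/3) = zeta 3 / 3 := by
  have := c3_dup (Real.pi/3)
  rw [show Real.pi/3 + Real.pi = -(2*Real.pi/3) + 2*Real.pi by ring, q3_per, q3_neg,
    show 2*(Real.pi/3) = 2*Real.pi/3 by ring, c3_two] at this
  linarith

lemma c4_half : q4 0 (Real.pi/2) = dirichletBeta 4 := by
  rw [q40]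
  unfold Ser dirichletBeta
  rw [Complex.im_tsum (ser_summable2 oneS oneS_le 4 (by norm_num) _ (by simp))]
  have hinj : Function.Injective (fun j : ℕ => 2*j) := by intro a b h; simpa using h
  have hfac : ∀ k : ℕ, Complex.exp (((k:ℂ)+1) * pt 0 (Real.pi/2)) = Complex.I^(k+1) := by
    intro k
    have : Complex.I = Complex.exp (Real.pi/2*Complex.I) := Complex.exp_pi_div_two_mul_I.symm
    rw [this, ← Complex.exp_nat_mul]
    congr 1
    unfold pt; push_cast; ring
  rw [← hinj.tsum_eq]
  · congr 1
    ext j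
    simp only [hfac]
    rw [pow_succ, pow_mul, Complex.I_sq]
    have : ((oneS (2*j):ℝ):ℂ) * ((-1)^j * Complex.I) / (((2*j:ℕ):ℂ)+1)^4
       = (((-1:ℝ)^j / (2*(j:ℝ)+1)^4 : ℝ) : ℂ) * Complex.I := by
      simp [oneS]; ring
    rw [this, Complex.im_ofReal_mul]
    simp
  · intro k hk
    rcases Nat.even_or_odd k with he | ho
    · obtain ⟨j, hj⟩ := he
      exact ⟨j, by simp only; omega⟩
    · exfalso
      obtain ⟨j, hj⟩ := ho
      apply hk
      simp only [hfac]
      rw [hj, show 2*j+1+1 = 2*(j+1) by ring, pow_mul, Complex.I_sq]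
      have : ((oneS (2*j+1):ℝ):ℂ) * ((-1)^(j+1)) / (((2*j+1:ℕ):ℂ)+1)^4
       = (((-1:ℝ)^(j+1) / ((2*(j:ℝ)+1)+1)^4 : ℝ) : ℂ) := by
        simp [oneS]
      rw [this, Complex.ofReal_im]

lemma c4_zero : q4 0 0 = 0 := by have := q4_neg 0 0; simp at this; linarith
lemma c4_pi : q4 0 Real.pi = 0 := by
  have h1 := q4_neg 0 Real.pi
  have h2 := q4_per 0 (-Real.pi)
  rw [show -Real.pi + 2*Real.pi = Real.pi by ring] at h2
  linarith
lemma c4_two : q4 0 (2*Real.pi/3) = 8/9 * q4 0 (Real.pi/3) := by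
  have := c4_dup (Real.pi/3)
  rw [show Real.pi/3 + Real.pi = -(2*Real.pi/3) + 2*Real.pi by ring, q4_per, q4_neg,
    show 2*(Real.pi/3) = 2*Real.pi/3 by ring] at this
  linarith
lemma c4_AB1 : q4 0 (Real.pi/6) - q4 0 (5*Real.pi/6) = q4 0 (Real.pi/3) / 8 := by
  have := c4_dup (Real.pi/6)
  rw [show Real.pi/6 + Real.pi = -(5*Real.pi/6) + 2*Real.pi by ring, q4_per, q4_neg,
    show 2*(Real.pi/6) = Real.pi/3 by ring] at this
  linarith
lemma c4_AB2 : q4 0 (Real.pi/6) + q4 0 (5*Real.pi/6) = 28/27 * dirichletBeta 4 := by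
  have := c4_trip (Real.pi/6)
  rw [show Real.pi/6 + 2*Real.pi/3 = 5*Real.pi/6 by ring,
    show Real.pi/6 + 4*Real.pi/3 = -(Real.pi/2) + 2*Real.pi by ring, q4_per, q4_neg,
    show 3*(Real.pi/6) = Real.pi/2 by ring, c4_half] at this
  linarith


lemma const_aux {f : ℝ → ℝ} {a b : ℝ} (hd : ∀ x ∈ Set.Ioo a b, HasDerivAt f 0 x) :
    ∀ x ∈ Set.Ioo a b, ∀ y ∈ Set.Ioo a b, f x = f y := by
  intro x hx y hy
  refine (isOpen_Ioo).is_const_of_deriv_eq_zero isPreconnected_Ioo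
    (fun z hz => (hd z hz).differentiableAt.differentiableWithinAt) ?_ hx hy
  intro z hz
  exact (hd z hz).deriv

lemma const_right {f : ℝ → ℝ} {a b c : ℝ} (hd : ∀ x ∈ Set.Ioo a b, HasDerivAt f 0 x)
    (hl : Tendsto f (𝓝[>] a) (𝓝 c)) : ∀ x ∈ Set.Ioo a b, f x = c := by
  intro x hx
  have h2 : Tendsto f (𝓝[>] a) (𝓝 (f x)) := by
    refine tendsto_const_nhds.congr' ?_
    filter_upwards [Ioo_mem_nhdsGT (hx.1.trans hx.2)] with y hy
    exact const_aux hd x hx y hy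
  exact tendsto_nhds_unique h2 hl

lemma const_left {f : ℝ → ℝ} {a b c : ℝ} (hd : ∀ x ∈ Set.Ioo a b, HasDerivAt f 0 x)
    (hl : Tendsto f (𝓝[<] b) (𝓝 c)) : ∀ x ∈ Set.Ioo a b, f x = c := by
  intro x hx
  have h2 : Tendsto f (𝓝[<] b) (𝓝 (f x)) := by
    refine tendsto_const_nhds.congr' ?_
    filter_upwards [Ioo_mem_nhdsLT (hx.1.trans hx.2)] with y hy
    exact const_aux hd x hx y hy
  exact tendsto_nhds_unique h2 hl

section
variable {l δ : ℝ → ℝ} {t : ℝ}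
lemma ser_contAt (n : ℕ) (h0 : l t < 0) (h1 : ContinuousAt l t) (h2 : ContinuousAt δ t) :
    ContinuousAt (fun t => Ser oneS (n+1) (pt (l t) (δ t))) t := by
  have h := (ser_deriv oneS oneS_le n (pt (l t) (δ t)) (by simpa)).continuousAt
  refine ContinuousAt.comp (f := fun t => pt (l t) (δ t)) h ?_
  unfold pt
  fun_prop

lemma q4_cont (h0 : l t < 0) (h1 : ContinuousAt l t) (h2 : ContinuousAt δ t) :
    ContinuousAt (fun t => q4 (l t) (δ t)) t := by
  have a4 := ser_contAt 3 h0 h1 h2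
  have a3 := ser_contAt 2 h0 h1 h2
  have a2 := ser_contAt 1 h0 h1 h2
  have a1 := ser_contAt 0 h0 h1 h2
  refine Complex.continuous_im.continuousAt.comp ?_
  simp only [R4]
  norm_num at a1 a2 a3 a4
  fun_prop

lemma q3_cont (h0 : l t < 0) (h1 : ContinuousAt l t) (h2 : ContinuousAt δ t) :
    ContinuousAt (fun t => q3 (l t) (δ t)) t := by
  have a3 := ser_contAt 2 h0 h1 h2
  have a2 := ser_contAt 1 h0 h1 h2
  have a1 := ser_contAt 0 h0 h1 h2
  refine Complex.continuous_re.continuousAt.comp ?_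
  simp only [R3]
  norm_num at a1 a2 a3
  fun_prop

lemma q2_cont (h0 : l t < 0) (h1 : ContinuousAt l t) (h2 : ContinuousAt δ t) :
    ContinuousAt (fun t => q2 (l t) (δ t)) t := by
  have a2 := ser_contAt 1 h0 h1 h2
  have a1 := ser_contAt 0 h0 h1 h2
  refine Complex.continuous_im.continuousAt.comp ?_
  simp only [R2]
  norm_num at a1 a2
  fun_prop
end

lemma c4_cont : Continuous (fun t => q4 0 t) :=
  continuous_iff_continuousAt.2 fun t => (c4_deriv t).continuousAt
lemma c3_cont : Continuous (fun t => q3 0 t) :=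
  continuous_iff_continuousAt.2 fun t => (c3_deriv t).continuousAt
lemma c2_cont : Continuous (fun t => q2 0 t) := by
  have h : ContinuousOn (fun t : ℝ => Ser oneS 2 (pt 0 t)) Set.univ := by
    refine (ser_cont oneS oneS_le 2 le_rfl).comp (f := fun t : ℝ => pt 0 t) ?_ ?_
    · unfold pt; fun_prop
    · intro t _; simp
  simp only [q20]
  exact Complex.continuous_im.comp (continuousOn_univ.1 h)

/-- `log (2 sin ψ)` -/
noncomputable def ls (ψ : ℝ) : ℝ := Real.log (2 * Real.sin ψ)

noncomputable def E0 (ψ : ℝ) : ℝ := ∫ u in (Real.pi/6)..ψ, (ls u)^3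

lemma E0_pi6 : E0 (Real.pi/6) = 0 := by simp [E0]

lemma ls_deriv {ψ : ℝ} (h : 0 < Real.sin ψ) : HasDerivAt ls (Real.cos ψ / Real.sin ψ) ψ := by
  have := ((Real.hasDerivAt_sin ψ).const_mul 2).log (by positivity)
  refine this.congr_deriv ?_
  field_simp

lemma E0_deriv {ψ : ℝ} (h0 : 0 < ψ) (h1 : ψ < Real.pi) : HasDerivAt E0 ((ls ψ)^3) ψ := by
  have hpi := Real.pi_pos
  have hc : ContinuousOn (fun u => (ls u)^3) (Set.Ioo 0 Real.pi) := by
    intro u hu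
    exact ((ls_deriv (Real.sin_pos_of_pos_of_lt_pi hu.1 hu.2)).continuousAt.pow 3).continuousWithinAt
  apply intervalIntegral.integral_hasDerivAt_right
  · apply ContinuousOn.intervalIntegrable
    apply hc.mono
    rw [← Set.uIoo_of_lt hpi] 
    intro u hu
    rw [Set.uIoo_of_lt hpi]
    rw [Set.mem_uIcc] at hu
    constructor
    · rcases hu with hu | hu <;> linarith [hu.1, hu.2]
    · rcases hu with hu | hu <;> linarith [hu.1, hu.2]
  · exact hc.stronglyMeasurableAtFilter isOpen_Ioo ψ ⟨h0, h1⟩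
  · exact hc.continuousAt (isOpen_Ioo.mem_nhds ⟨h0, h1⟩)

lemma ls_bot : Tendsto ls (𝓝[>] 0) atBot := by
  refine Real.tendsto_log_nhdsGT_zero.comp ?_
  rw [tendsto_nhdsWithin_iff]
  constructor
  · have : Tendsto (fun ψ => 2 * Real.sin ψ) (𝓝 0) (𝓝 (2 * Real.sin 0)) := by
      apply Continuous.tendsto; fun_prop
    simpa using this.mono_left nhdsWithin_le_nhds
  · filter_upwards [Ioo_mem_nhdsGT Real.pi_pos] with ψ hψ
    have := Real.sin_pos_of_pos_of_lt_pi hψ.1 hψ.2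
    simpa using this

lemma ls_neg {ψ : ℝ} (hψ : ψ ∈ Set.Ioo 0 (Real.pi/6)) : ls ψ < 0 := by
  have hpi := Real.pi_pos
  have h1 := Real.sin_pos_of_pos_of_lt_pi hψ.1 (by linarith [hψ.2])
  have h2 : Real.sin ψ < Real.sin (Real.pi/6) :=
    Real.sin_lt_sin_of_lt_of_le_pi_div_two (by linarith [hψ.1]) (by linarith) hψ.2
  rw [Real.sin_pi_div_six] at h2
  apply Real.log_neg <;> linarith

lemma ls_pi6 : ls (Real.pi/6) = 0 := by simp [ls, Real.sin_pi_div_six]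

lemma ls_lim : Tendsto ls (𝓝[<] (Real.pi/6)) (𝓝 0) := by
  rw [← ls_pi6]
  refine (ls_deriv ?_).continuousAt.tendsto.mono_left nhdsWithin_le_nhds
  rw [Real.sin_pi_div_six]; norm_num

lemma ls_neg_ev : ∀ᶠ t in 𝓝[<] (Real.pi/6), ls t < 0 := by
  filter_upwards [Ioo_mem_nhdsLT (show (0:ℝ) < Real.pi/6 by linarith [Real.pi_pos])] with t ht
  exact ls_neg ht

lemma aff_deriv (m b t : ℝ) : HasDerivAt (fun t : ℝ => m * t + b) m t := by
  simpa using ((hasDerivAt_id t).const_mul m).add_const b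

lemma c2_aff (m b t N : ℝ) (hN : 0 < N) (h : N^2 = 2 - 2 * Real.cos (m*t+b)) :
    HasDerivAt (fun t => q2 0 (m*t+b)) (- m * Real.log N) t := by
  have := (c2_deriv (m*t+b) N hN h).comp t (aff_deriv m b t)
  exact this.congr_deriv (by ring)
lemma c3_aff (m b t : ℝ) : HasDerivAt (fun t => q3 0 (m*t+b)) (- m * q2 0 (m*t+b)) t := by
  have := (c3_deriv (m*t+b)).comp t (aff_deriv m b t)
  exact this.congr_deriv (by ring)
lemma c4_aff (m b t : ℝ) : HasDerivAt (fun t => q4 0 (m*t+b)) (m * q3 0 (m*t+b)) t := by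
  have := (c4_deriv (m*t+b)).comp t (aff_deriv m b t)
  exact this.congr_deriv (by ring)


lemma sidep_facts {ψ : ℝ} (hψ : ψ ∈ Set.Ioo 0 (Real.pi/6)) :
    0 < Real.sin ψ ∧ 0 < Real.cos ψ ∧ Real.sin ψ ^ 2 + Real.cos ψ ^ 2 = 1 ∧
    0 < Real.cos ψ - √3 * Real.sin ψ ∧ (√3:ℝ)^2 = 3 ∧ Real.exp (ls ψ) = 2 * Real.sin ψ := by
  have hpi := Real.pi_pos
  have h1 := Real.sin_pos_of_pos_of_lt_pi hψ.1 (by linarith [hψ.2])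
  have h2 : 0 < Real.cos ψ := Real.cos_pos_of_mem_Ioo ⟨by linarith [hψ.1], by linarith [hψ.2]⟩
  have h3 : 0 < Real.cos (ψ + Real.pi/3) := Real.cos_pos_of_mem_Ioo ⟨by linarith [hψ.1], by linarith [hψ.2]⟩
  rw [Real.cos_add, Real.cos_pi_div_three, Real.sin_pi_div_three] at h3
  refine ⟨h1, h2, Real.sin_sq_add_cos_sq ψ, by linarith, Real.sq_sqrt (by norm_num), ?_⟩
  exact Real.exp_log (by linarith)

section
variable {ψ : ℝ}

lemma cs_a (ψ : ℝ) : Real.cos (1*ψ + -(Real.pi/2)) = Real.sin ψ ∧ Real.sin (1*ψ + -(Real.pi/2)) = -Real.cos ψ := by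
  rw [one_mul, ← sub_eq_add_neg, Real.cos_sub_pi_div_two, Real.sin_sub_pi_div_two]; simp
lemma cs_b (ψ : ℝ) : Real.cos (3*ψ + -(Real.pi/2)) = 3 * Real.sin ψ - 4 * Real.sin ψ ^3
    ∧ Real.sin (3*ψ + -(Real.pi/2)) = -(4 * Real.cos ψ ^3 - 3 * Real.cos ψ) := by
  rw [← sub_eq_add_neg, Real.cos_sub_pi_div_two, Real.sin_sub_pi_div_two, Real.sin_three_mul, Real.cos_three_mul]; simp
lemma cs_c (ψ : ℝ) : Real.cos (1*ψ + -(Real.pi/6)) = √3/2 * Real.cos ψ + Real.sin ψ/2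
    ∧ Real.sin (1*ψ + -(Real.pi/6)) = √3/2 * Real.sin ψ - Real.cos ψ/2 := by
  rw [one_mul, ← sub_eq_add_neg, Real.cos_sub, Real.sin_sub, Real.cos_pi_div_six, Real.sin_pi_div_six]
  constructor <;> ring
lemma cs_d (ψ : ℝ) : Real.cos (1*ψ + -(5*Real.pi/6)) = -√3/2 * Real.cos ψ + Real.sin ψ/2
    ∧ Real.sin (1*ψ + -(5*Real.pi/6)) = -√3/2 * Real.sin ψ - Real.cos ψ/2 := by
  rw [one_mul, ← sub_eq_add_neg, Real.cos_sub, Real.sin_sub, show 5*Real.pi/6 = Real.pi - Real.pi/6 by ring,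
    Real.cos_pi_sub, Real.sin_pi_sub, Real.cos_pi_div_six, Real.sin_pi_div_six]
  constructor <;> ring


lemma L0p_a (hψ : ψ ∈ Set.Ioo 0 (Real.pi/6)) : Ser oneS 0 (pt (ls ψ) (1*ψ + -(Real.pi/2))) = pt (-2*Real.sin ψ^2) (-2 * Real.cos ψ * Real.sin ψ) := by
  obtain ⟨hy, hx, h1, -, -, he⟩ := sidep_facts hψ
  obtain ⟨hc, hs⟩ := cs_a ψ
  refine L0_val (ls_neg hψ) rfl rfl ?_ ?_ <;> rw [he, hc, hs] <;> grind

lemma L1p_a (hψ : ψ ∈ Set.Ioo 0 (Real.pi/6)) : (Ser oneS 1 (pt (ls ψ) (1*ψ + -(Real.pi/2)))).re = - Real.log 1 := by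
  obtain ⟨hy, hx, h1, -, -, he⟩ := sidep_facts hψ
  obtain ⟨hc, hs⟩ := cs_a ψ
  refine L1_re_val (ls_neg hψ) one_pos rfl rfl ?_
  rw [he, hc, hs]; grind

lemma L0p_b (hψ : ψ ∈ Set.Ioo 0 (Real.pi/6)) : Ser oneS 0 (pt (ls ψ) (3*ψ + -(Real.pi/2))) = 
    pt (2*Real.sin ψ^2/(Real.cos ψ^2-3*Real.sin ψ^2)) (-2 * Real.cos ψ * Real.sin ψ/(Real.cos ψ^2-3*Real.sin ψ^2)) := by
  obtain ⟨hy, hx, h1, hp, hw, he⟩ := sidep_facts hψ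
  obtain ⟨hc, hs⟩ := cs_b ψ
  have hq : 0 < Real.cos ψ^2-3*Real.sin ψ^2 := by nlinarith [Real.sqrt_nonneg 3, mul_pos hp hp, mul_nonneg (Real.sqrt_nonneg 3) hy.le, mul_pos hp hx]
  refine L0_val (ls_neg hψ) rfl rfl ?_ ?_ <;> rw [he, hc, hs] <;> field_simp <;> grind

lemma L1p_b (hψ : ψ ∈ Set.Ioo 0 (Real.pi/6)) : (Ser oneS 1 (pt (ls ψ) (3*ψ + -(Real.pi/2)))).re = - Real.log ((Real.cos ψ - √3 * Real.sin ψ)*(Real.cos ψ + √3 * Real.sin ψ)) := by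
  obtain ⟨hy, hx, h1, hp, hw, he⟩ := sidep_facts hψ
  obtain ⟨hc, hs⟩ := cs_b ψ
  refine L1_re_val (ls_neg hψ) (by positivity) rfl rfl ?_
  rw [he, hc, hs]; grind

lemma L0p_c (hψ : ψ ∈ Set.Ioo 0 (Real.pi/6)) : Ser oneS 0 (pt (ls ψ) (1*ψ + -(Real.pi/6))) = 
    pt (√3*Real.sin ψ/(Real.cos ψ-√3*Real.sin ψ)) (-Real.sin ψ/(Real.cos ψ-√3*Real.sin ψ)) := by
  obtain ⟨hy, hx, h1, hp, hw, he⟩ := sidep_facts hψ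
  obtain ⟨hc, hs⟩ := cs_c ψ
  refine L0_val (ls_neg hψ) rfl rfl ?_ ?_ <;> rw [he, hc, hs] <;> field_simp <;> grind

lemma L1p_c (hψ : ψ ∈ Set.Ioo 0 (Real.pi/6)) : (Ser oneS 1 (pt (ls ψ) (1*ψ + -(Real.pi/6)))).re = - Real.log (Real.cos ψ - √3 * Real.sin ψ) := by
  obtain ⟨hy, hx, h1, hp, hw, he⟩ := sidep_facts hψ
  obtain ⟨hc, hs⟩ := cs_c ψ
  refine L1_re_val (ls_neg hψ) (by positivity) rfl rfl ?_
  rw [he, hc, hs]; grind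

lemma L0p_d (hψ : ψ ∈ Set.Ioo 0 (Real.pi/6)) : Ser oneS 0 (pt (ls ψ) (1*ψ + -(5*Real.pi/6))) = 
    pt (-√3*Real.sin ψ/(Real.cos ψ+√3*Real.sin ψ)) (-Real.sin ψ/(Real.cos ψ+√3*Real.sin ψ)) := by
  obtain ⟨hy, hx, h1, hp, hw, he⟩ := sidep_facts hψ
  obtain ⟨hc, hs⟩ := cs_d ψ
  have : 0 < Real.cos ψ+√3*Real.sin ψ := by positivity
  refine L0_val (ls_neg hψ) rfl rfl ?_ ?_ <;> rw [he, hc, hs] <;> field_simp <;> grind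

lemma L1p_d (hψ : ψ ∈ Set.Ioo 0 (Real.pi/6)) : (Ser oneS 1 (pt (ls ψ) (1*ψ + -(5*Real.pi/6)))).re = - Real.log (Real.cos ψ + √3 * Real.sin ψ) := by
  obtain ⟨hy, hx, h1, hp, hw, he⟩ := sidep_facts hψ
  obtain ⟨hc, hs⟩ := cs_d ψ
  refine L1_re_val (ls_neg hψ) (by positivity) rfl rfl ?_
  rw [he, hc, hs]; grind
end


lemma c2_zero : q2 0 0 = 0 := by have := q2_neg 0 0; simp at this; linarith
lemma q2_pi (l : ℝ) : q2 l Real.pi = 0 := by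
  have h1 := q2_neg l Real.pi
  have h2 := q2_per l (-Real.pi)
  rw [show -Real.pi + 2*Real.pi = Real.pi by ring] at h2
  linarith
lemma q4_pi (l : ℝ) : q4 l Real.pi = 0 := by
  have h1 := q4_neg l Real.pi
  have h2 := q4_per l (-Real.pi)
  rw [show -Real.pi + 2*Real.pi = Real.pi by ring] at h2
  linarith

lemma aff_lim (m b t : ℝ) (S : Set ℝ) : Tendsto (fun t : ℝ => m*t+b) (𝓝[S] t) (𝓝 (m*t+b)) :=
  (aff_deriv m b t).continuousAt.tendsto.mono_left nhdsWithin_le_nhds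
lemma c2_lim (m b t : ℝ) (S : Set ℝ) : Tendsto (fun t : ℝ => q2 0 (m*t+b)) (𝓝[S] t) (𝓝 (q2 0 (m*t+b))) :=
  (c2_cont.tendsto _).comp (aff_lim m b t S)
lemma c3_lim (m b t : ℝ) (S : Set ℝ) : Tendsto (fun t : ℝ => q3 0 (m*t+b)) (𝓝[S] t) (𝓝 (q3 0 (m*t+b))) :=
  (c3_cont.tendsto _).comp (aff_lim m b t S)
lemma c4_lim (m b t : ℝ) (S : Set ℝ) : Tendsto (fun t : ℝ => q4 0 (m*t+b)) (𝓝[S] t) (𝓝 (q4 0 (m*t+b))) :=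
  (c4_cont.tendsto _).comp (aff_lim m b t S)

lemma r2p : ∀ ψ ∈ Set.Ioo 0 (Real.pi/6), q2 (ls ψ) (1*ψ + -(Real.pi/2)) + q2 0 (2*ψ+0) = 0 := by
  apply const_right (f := fun ψ => q2 (ls ψ) (1*ψ + -(Real.pi/2)) + q2 0 (2*ψ+0))
  · intro ψ hψ
    obtain ⟨hy, hx, h1, hp, hw, he⟩ := sidep_facts hψ
    have a := q2_deriv (ls_neg hψ) (ls_deriv hy) (aff_deriv 1 (-(Real.pi/2)) ψ) (L0p_a hψ) (L1p_a hψ)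
    have c := c2_aff 2 0 ψ (2*Real.sin ψ) (by positivity) (by rw [add_zero, Real.cos_two_mul]; nlinarith)
    refine (a.add c).congr_deriv ?_
    have : Real.log (2 * Real.sin ψ) = ls ψ := rfl
    rw [this, Real.log_one]
    field_simp
    grind
  · have := (q2_bot (δ := fun ψ => 1*ψ + -(Real.pi/2)) ls_bot).add (c2_lim 2 0 0 (Set.Ioi 0))
    simpa [c2_zero] using this

lemma r3p : ∀ ψ ∈ Set.Ioo 0 (Real.pi/6), q3 (ls ψ) (1*ψ + -(Real.pi/2)) + q3 0 (2*ψ+0)/2 = zeta 3/2 := by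
  apply const_right (f := fun ψ => q3 (ls ψ) (1*ψ + -(Real.pi/2)) + q3 0 (2*ψ+0)/2)
  · intro ψ hψ
    obtain ⟨hy, hx, h1, hp, hw, he⟩ := sidep_facts hψ
    have a := q3_deriv (ls_neg hψ) (ls_deriv hy) (aff_deriv 1 (-(Real.pi/2)) ψ) (L0p_a hψ)
    have c := c3_aff 2 0 ψ
    refine (a.add (c.div_const 2)).congr_deriv ?_
    have := r2p ψ hψ
    have e : -2 * Real.sin ψ ^ 2 * (Real.cos ψ / Real.sin ψ) - -2 * Real.cos ψ * Real.sin ψ * 1 = 0 := by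
      field_simp; ring
    rw [e]
    linarith
  · have := (q3_bot (δ := fun ψ => 1*ψ + -(Real.pi/2)) ls_bot).add ((c3_lim 2 0 0 (Set.Ioi 0)).div_const 2)
    simpa [c3_zero] using this

lemma r4p : ∀ ψ ∈ Set.Ioo 0 (Real.pi/6), q4 (ls ψ) (1*ψ + -(Real.pi/2)) - E0 ψ/3 + q4 0 (2*ψ+0)/4 - zeta 3 * ψ/2
    = -3/4 * q4 0 (Real.pi/3) - Real.pi * zeta 3/12 := by
  apply const_left (f := fun ψ => q4 (ls ψ) (1*ψ + -(Real.pi/2)) - E0 ψ/3 + q4 0 (2*ψ+0)/4 - zeta 3 * ψ/2)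
  · intro ψ hψ
    obtain ⟨hy, hx, h1, hp, hw, he⟩ := sidep_facts hψ
    have a := q4_deriv (ls_neg hψ) (ls_deriv hy) (aff_deriv 1 (-(Real.pi/2)) ψ) (L0p_a hψ)
    have c := c4_aff 2 0 ψ
    have e := E0_deriv hψ.1 (by linarith [hψ.2, Real.pi_pos])
    refine (((a.sub (e.div_const 3)).add (c.div_const 4)).sub (((hasDerivAt_id ψ).const_mul (zeta 3)).div_const 2)).congr_deriv ?_
    have := r3p ψ hψ
    have e : -2 * Real.sin ψ ^ 2 * 1 + -2 * Real.cos ψ * Real.sin ψ * (Real.cos ψ / Real.sin ψ) = -2 := by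
      field_simp; linarith
    rw [e]
    linarith
  · have a := q4_lim ls_lim ls_neg_ev (aff_lim 1 (-(Real.pi/2)) (Real.pi/6) (Set.Iio (Real.pi/6)))
    have e := (E0_deriv (ψ := Real.pi/6) (by linarith [Real.pi_pos]) (by linarith [Real.pi_pos])).continuousAt.tendsto.mono_left (nhdsWithin_le_nhds (s := Set.Iio (Real.pi/6)))
    have c := c4_lim 2 0 (Real.pi/6) (Set.Iio (Real.pi/6))
    have i := (continuous_id.tendsto (Real.pi/6)).mono_left (nhdsWithin_le_nhds (s := Set.Iio (Real.pi/6)))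
    have := (((a.sub (e.div_const 3)).add (c.div_const 4)).sub ((i.const_mul (zeta 3)).div_const 2))
    convert! this using 2
    rw [show 1*(Real.pi/6) + -(Real.pi/2) = -(Real.pi/3) by ring, q4_neg, show 2*(Real.pi/6)+0 = Real.pi/3 by ring, E0_pi6]
    simp only [id]
    ring

/-- limit of `E0` at zero -/
lemma E0_zero : Tendsto E0 (𝓝[>] 0) (𝓝 (9/4 * q4 0 (Real.pi/3) + Real.pi * zeta 3/4)) := by
  have a := (q4_bot (δ := fun ψ => 1*ψ + -(Real.pi/2)) ls_bot)
  have c := c4_lim 2 0 0 (Set.Ioi 0)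
  have i := (continuous_id.tendsto (0:ℝ)).mono_left (nhdsWithin_le_nhds (s := Set.Ioi 0))
  have := (((a.const_mul 3).add (c.const_mul (3/4))).sub (i.const_mul (3/2*zeta 3))).add_const (9/4 * q4 0 (Real.pi/3) + Real.pi * zeta 3/4)
  have h2 := this.congr' (f₂ := E0) ?_
  · convert! h2 using 2
    simp [c4_zero]
  · filter_upwards [Ioo_mem_nhdsGT (show (0:ℝ) < Real.pi/6 by linarith [Real.pi_pos])] with ψ hψ
    have := r4p ψ hψ
    simp only [id]
    linarith

lemma F2p : ∀ ψ ∈ Set.Ioo 0 (Real.pi/6), 9 * q2 (ls ψ) (3*ψ + -(Real.pi/2)) - 3 * q2 (ls ψ) (1*ψ + -(Real.pi/6))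
     - 3 * q2 (ls ψ) (1*ψ + -(5*Real.pi/6)) + 6 * q2 0 (2*ψ+0) - 4 * q2 0 (6*ψ+Real.pi) + 12 * q2 0 (2*ψ+Real.pi) = 0 := by
  apply const_right (f := fun ψ => 9 * q2 (ls ψ) (3*ψ + -(Real.pi/2)) - 3 * q2 (ls ψ) (1*ψ + -(Real.pi/6))
     - 3 * q2 (ls ψ) (1*ψ + -(5*Real.pi/6)) + 6 * q2 0 (2*ψ+0) - 4 * q2 0 (6*ψ+Real.pi) + 12 * q2 0 (2*ψ+Real.pi))
  · intro ψ hψ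
    obtain ⟨hy, hx, h1, hp, hw, he⟩ := sidep_facts hψ
    have hm : 0 < Real.cos ψ + √3 * Real.sin ψ := by positivity
    have a := q2_deriv (ls_neg hψ) (ls_deriv hy) (aff_deriv 3 (-(Real.pi/2)) ψ) (L0p_b hψ) (L1p_b hψ)
    have b := q2_deriv (ls_neg hψ) (ls_deriv hy) (aff_deriv 1 (-(Real.pi/6)) ψ) (L0p_c hψ) (L1p_c hψ)
    have d := q2_deriv (ls_neg hψ) (ls_deriv hy) (aff_deriv 1 (-(5*Real.pi/6)) ψ) (L0p_d hψ) (L1p_d hψ)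
    have c := c2_aff 2 0 ψ (2*Real.sin ψ) (by positivity) (by rw [add_zero, Real.cos_two_mul]; nlinarith)
    have c6 := c2_aff 6 Real.pi ψ ((2*Real.cos ψ) * ((Real.cos ψ - √3 * Real.sin ψ)*(Real.cos ψ + √3 * Real.sin ψ))) (by positivity) 
      (by rw [Real.cos_add_pi, show 6*ψ = 2*(3*ψ) by ring, Real.cos_two_mul, Real.cos_three_mul]; grind)
    have c2 := c2_aff 2 Real.pi ψ (2*Real.cos ψ) (by positivity) (by rw [Real.cos_add_pi, Real.cos_two_mul]; ring)
    refine ((((((a.const_mul 9).sub (b.const_mul 3)).sub (d.const_mul 3)).add (c.const_mul 6)).sub (c6.const_mul 4)).add (c2.const_mul 12)).congr_deriv ?_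
    have : Real.log (2 * Real.sin ψ) = ls ψ := rfl
    rw [this, Real.log_mul (x := 2 * Real.cos ψ) (by positivity) (by positivity), Real.log_mul (x := Real.cos ψ - √3 * Real.sin ψ) (by positivity) (by positivity)]
    have hQ : Real.cos ψ ^ 2 - 3 * Real.sin ψ ^ 2 = (Real.cos ψ - √3 * Real.sin ψ)*(Real.cos ψ + √3 * Real.sin ψ) := by grind
    have e : 9 * (2 * Real.sin ψ ^ 2 / (Real.cos ψ ^ 2 - 3 * Real.sin ψ ^ 2) * 3 + -2 * Real.cos ψ * Real.sin ψ / (Real.cos ψ ^ 2 - 3 * Real.sin ψ ^ 2) * (Real.cos ψ / Real.sin ψ))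
      - 3 * (√3 * Real.sin ψ / (Real.cos ψ - √3 * Real.sin ψ) * 1 + -Real.sin ψ / (Real.cos ψ - √3 * Real.sin ψ) * (Real.cos ψ / Real.sin ψ))
      - 3 * (-√3 * Real.sin ψ / (Real.cos ψ + √3 * Real.sin ψ) * 1 + -Real.sin ψ / (Real.cos ψ + √3 * Real.sin ψ) * (Real.cos ψ / Real.sin ψ)) = -12 := by
      rw [hQ]
      field_simp
      grind
    linear_combination -(ls ψ) * e
  · have := ((((((q2_bot (δ := fun ψ => 3*ψ + -(Real.pi/2)) ls_bot).const_mul 9).sub ((q2_bot (δ := fun ψ => 1*ψ + -(Real.pi/6)) ls_bot).const_mul 3)).sub ((q2_bot (δ := fun ψ => 1*ψ + -(5*Real.pi/6)) ls_bot).const_mul 3)).add ((c2_lim 2 0 0 (Set.Ioi 0)).const_mul 6)).sub ((c2_lim 6 Real.pi 0 (Set.Ioi 0)).const_mul 4)).add ((c2_lim 2 Real.pi 0 (Set.Ioi 0)).const_mul 12)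
    simpa [c2_zero, q2_pi] using this

lemma F3p : ∀ ψ ∈ Set.Ioo 0 (Real.pi/6), 3 * q3 (ls ψ) (3*ψ + -(Real.pi/2)) - 3 * q3 (ls ψ) (1*ψ + -(Real.pi/6))
     - 3 * q3 (ls ψ) (1*ψ + -(5*Real.pi/6)) + 3 * q3 0 (2*ψ+0) - 2/3 * q3 0 (6*ψ+Real.pi) + 6 * q3 0 (2*ψ+Real.pi) = -zeta 3 := by
  apply const_right (f := fun ψ => 3 * q3 (ls ψ) (3*ψ + -(Real.pi/2)) - 3 * q3 (ls ψ) (1*ψ + -(Real.pi/6))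
     - 3 * q3 (ls ψ) (1*ψ + -(5*Real.pi/6)) + 3 * q3 0 (2*ψ+0) - 2/3 * q3 0 (6*ψ+Real.pi) + 6 * q3 0 (2*ψ+Real.pi))
  · intro ψ hψ
    obtain ⟨hy, hx, h1, hp, hw, he⟩ := sidep_facts hψ
    have hm : 0 < Real.cos ψ + √3 * Real.sin ψ := by positivity
    have a := q3_deriv (ls_neg hψ) (ls_deriv hy) (aff_deriv 3 (-(Real.pi/2)) ψ) (L0p_b hψ)
    have b := q3_deriv (ls_neg hψ) (ls_deriv hy) (aff_deriv 1 (-(Real.pi/6)) ψ) (L0p_c hψ)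
    have d := q3_deriv (ls_neg hψ) (ls_deriv hy) (aff_deriv 1 (-(5*Real.pi/6)) ψ) (L0p_d hψ)
    have c := c3_aff 2 0 ψ
    have c6 := c3_aff 6 Real.pi ψ
    have c2 := c3_aff 2 Real.pi ψ
    refine ((((((a.const_mul 3).sub (b.const_mul 3)).sub (d.const_mul 3)).add (c.const_mul 3)).sub (c6.const_mul (2/3))).add (c2.const_mul 6)).congr_deriv ?_
    have hQ : Real.cos ψ ^ 2 - 3 * Real.sin ψ ^ 2 = (Real.cos ψ - √3 * Real.sin ψ)*(Real.cos ψ + √3 * Real.sin ψ) := by grind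
    have e : 3 * (2 * Real.sin ψ ^ 2 / (Real.cos ψ ^ 2 - 3 * Real.sin ψ ^ 2) * (Real.cos ψ / Real.sin ψ) - -2 * Real.cos ψ * Real.sin ψ / (Real.cos ψ ^ 2 - 3 * Real.sin ψ ^ 2) * 3)
      - 3 * (√3 * Real.sin ψ / (Real.cos ψ - √3 * Real.sin ψ) * (Real.cos ψ / Real.sin ψ) - -Real.sin ψ / (Real.cos ψ - √3 * Real.sin ψ) * 1)
      - 3 * (-√3 * Real.sin ψ / (Real.cos ψ + √3 * Real.sin ψ) * (Real.cos ψ / Real.sin ψ) - -Real.sin ψ / (Real.cos ψ + √3 * Real.sin ψ) * 1) = 0 := by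
      rw [hQ]
      field_simp
      grind
    linear_combination (ls ψ)^2/2 * e - F2p ψ hψ
  · have := ((((((q3_bot (δ := fun ψ => 3*ψ + -(Real.pi/2)) ls_bot).const_mul 3).sub ((q3_bot (δ := fun ψ => 1*ψ + -(Real.pi/6)) ls_bot).const_mul 3)).sub ((q3_bot (δ := fun ψ => 1*ψ + -(5*Real.pi/6)) ls_bot).const_mul 3)).add ((c3_lim 2 0 0 (Set.Ioi 0)).const_mul 3)).sub ((c3_lim 6 Real.pi 0 (Set.Ioi 0)).const_mul (2/3))).add ((c3_lim 2 Real.pi 0 (Set.Ioi 0)).const_mul 6)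
    convert! this using 2
    simp [c3_zero, c3_pi]
    ring

lemma F4p : ∀ ψ ∈ Set.Ioo 0 (Real.pi/6), q4 (ls ψ) (3*ψ + -(Real.pi/2)) - 3 * q4 (ls ψ) (1*ψ + -(Real.pi/6))
     - 3 * q4 (ls ψ) (1*ψ + -(5*Real.pi/6)) + 3/2 * q4 0 (2*ψ+0) - 1/9 * q4 0 (6*ψ+Real.pi) + 3 * q4 0 (2*ψ+Real.pi)
     + 2/3 * E0 ψ + zeta 3 * ψ = 2/3*(9/4 * q4 0 (Real.pi/3) + Real.pi * zeta 3/4) := by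
  apply const_right (f := fun ψ => q4 (ls ψ) (3*ψ + -(Real.pi/2)) - 3 * q4 (ls ψ) (1*ψ + -(Real.pi/6))
     - 3 * q4 (ls ψ) (1*ψ + -(5*Real.pi/6)) + 3/2 * q4 0 (2*ψ+0) - 1/9 * q4 0 (6*ψ+Real.pi) + 3 * q4 0 (2*ψ+Real.pi)
     + 2/3 * E0 ψ + zeta 3 * ψ)
  · intro ψ hψ
    obtain ⟨hy, hx, h1, hp, hw, he⟩ := sidep_facts hψ
    have hm : 0 < Real.cos ψ + √3 * Real.sin ψ := by positivity
    have a := q4_deriv (ls_neg hψ) (ls_deriv hy) (aff_deriv 3 (-(Real.pi/2)) ψ) (L0p_b hψ)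
    have b := q4_deriv (ls_neg hψ) (ls_deriv hy) (aff_deriv 1 (-(Real.pi/6)) ψ) (L0p_c hψ)
    have d := q4_deriv (ls_neg hψ) (ls_deriv hy) (aff_deriv 1 (-(5*Real.pi/6)) ψ) (L0p_d hψ)
    have c := c4_aff 2 0 ψ
    have c6 := c4_aff 6 Real.pi ψ
    have c2 := c4_aff 2 Real.pi ψ
    have e := E0_deriv hψ.1 (by linarith [hψ.2, Real.pi_pos])
    refine ((((((((a.sub (b.const_mul 3)).sub (d.const_mul 3)).add (c.const_mul (3/2))).sub (c6.const_mul (1/9))).add (c2.const_mul 3))).add (e.const_mul (2/3))).add ((hasDerivAt_id ψ).const_mul (zeta 3))).congr_deriv ?_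
    have hQ : Real.cos ψ ^ 2 - 3 * Real.sin ψ ^ 2 = (Real.cos ψ - √3 * Real.sin ψ)*(Real.cos ψ + √3 * Real.sin ψ) := by grind
    have e : (2 * Real.sin ψ ^ 2 / (Real.cos ψ ^ 2 - 3 * Real.sin ψ ^ 2) * 3 + -2 * Real.cos ψ * Real.sin ψ / (Real.cos ψ ^ 2 - 3 * Real.sin ψ ^ 2) * (Real.cos ψ / Real.sin ψ))
      - 3 * (√3 * Real.sin ψ / (Real.cos ψ - √3 * Real.sin ψ) * 1 + -Real.sin ψ / (Real.cos ψ - √3 * Real.sin ψ) * (Real.cos ψ / Real.sin ψ))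
      - 3 * (-√3 * Real.sin ψ / (Real.cos ψ + √3 * Real.sin ψ) * 1 + -Real.sin ψ / (Real.cos ψ + √3 * Real.sin ψ) * (Real.cos ψ / Real.sin ψ)) = 4 := by
      rw [hQ]
      field_simp
      grind
    linear_combination -(ls ψ)^3/6 * e + F3p ψ hψ
  · have i := (continuous_id.tendsto (0:ℝ)).mono_left (nhdsWithin_le_nhds (s := Set.Ioi 0))
    have := (((((((q4_bot (δ := fun ψ => 3*ψ + -(Real.pi/2)) ls_bot).sub ((q4_bot (δ := fun ψ => 1*ψ + -(Real.pi/6)) ls_bot).const_mul 3)).sub ((q4_bot (δ := fun ψ => 1*ψ + -(5*Real.pi/6)) ls_bot).const_mul 3)).add ((c4_lim 2 0 0 (Set.Ioi 0)).const_mul (3/2))).sub ((c4_lim 6 Real.pi 0 (Set.Ioi 0)).const_mul (1/9))).add ((c4_lim 2 Real.pi 0 (Set.Ioi 0)).const_mul 3)).add (E0_zero.const_mul (2/3))).add (i.const_mul (zeta 3))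
    convert! this using 2
    simp [c4_zero, q4_pi]


noncomputable def lm (θ : ℝ) : ℝ := -Real.log (2 * Real.cos θ)

lemma lm_deriv {θ : ℝ} (h : 0 < Real.cos θ) : HasDerivAt lm (Real.sin θ / Real.cos θ) θ := by
  have := (((Real.hasDerivAt_cos θ).const_mul 2).log (by positivity)).neg
  refine this.congr_deriv ?_
  field_simp

lemma sidem_facts {θ : ℝ} (hθ : θ ∈ Set.Ioo 0 (Real.pi/3)) :
    0 < Real.sin θ ∧ 0 < Real.cos θ ∧ Real.sin θ ^ 2 + Real.cos θ ^ 2 = 1 ∧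
    0 < √3 * Real.cos θ - Real.sin θ ∧ (√3:ℝ)^2 = 3 ∧ Real.exp (lm θ) = 1 / (2 * Real.cos θ) ∧ 0 < √3 * Real.cos θ + Real.sin θ := by
  have hpi := Real.pi_pos
  have h1 := Real.sin_pos_of_pos_of_lt_pi hθ.1 (by linarith [hθ.2])
  have h2 : 0 < Real.cos θ := Real.cos_pos_of_mem_Ioo ⟨by linarith [hθ.1], by linarith [hθ.2]⟩
  have h3 : 0 < Real.sin (Real.pi/3 - θ) := Real.sin_pos_of_pos_of_lt_pi (by linarith [hθ.2]) (by linarith [hθ.1])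
  rw [Real.sin_sub, Real.cos_pi_div_three, Real.sin_pi_div_three] at h3
  refine ⟨h1, h2, Real.sin_sq_add_cos_sq θ, by linarith, Real.sq_sqrt (by norm_num), ?_, by positivity⟩
  unfold lm
  rw [Real.exp_neg, Real.exp_log (by positivity), one_div]

lemma lm_neg' {θ : ℝ} (h0 : 0 ≤ θ) (h1 : θ < Real.pi/3) : lm θ < 0 := by
  have hpi := Real.pi_pos
  have h2 : Real.cos (Real.pi/3) < Real.cos θ :=
    Real.cos_lt_cos_of_nonneg_of_le_pi h0 (by linarith) h1
  rw [Real.cos_pi_div_three] at h2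
  have := Real.log_pos (x := 2 * Real.cos θ) (by linarith)
  unfold lm; linarith
lemma lm_neg {θ : ℝ} (hθ : θ ∈ Set.Ioo 0 (Real.pi/3)) : lm θ < 0 := lm_neg' hθ.1.le hθ.2
lemma lm_pi3 : lm (Real.pi/3) = 0 := by simp [lm]
lemma lm_lim : Tendsto lm (𝓝[<] (Real.pi/3)) (𝓝 0) := by
  have := (lm_deriv (θ := Real.pi/3) (by rw [Real.cos_pi_div_three]; norm_num)).continuousAt.tendsto
  rw [lm_pi3] at this
  exact this.mono_left nhdsWithin_le_nhds
lemma lm_neg_ev : ∀ᶠ t in 𝓝[<] (Real.pi/3), lm t < 0 := by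
  filter_upwards [Ioo_mem_nhdsLT (show (0:ℝ) < Real.pi/3 by linarith [Real.pi_pos])] with t ht using lm_neg ht

section
variable {θ : ℝ}

lemma csm_b (θ : ℝ) : Real.cos (3*θ + Real.pi) = -(4 * Real.cos θ ^3 - 3 * Real.cos θ)
    ∧ Real.sin (3*θ + Real.pi) = -(3 * Real.sin θ - 4 * Real.sin θ ^3) := by
  rw [Real.cos_add_pi, Real.sin_add_pi, Real.sin_three_mul, Real.cos_three_mul]; simp
lemma csm_c (θ : ℝ) : Real.cos (1*θ + Real.pi/3) = Real.cos θ/2 - Real.sin θ*√3/2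
    ∧ Real.sin (1*θ + Real.pi/3) = Real.sin θ/2 + Real.cos θ*√3/2 := by
  rw [one_mul, Real.cos_add, Real.sin_add, Real.cos_pi_div_three, Real.sin_pi_div_three]
  constructor <;> ring
lemma csm_d (θ : ℝ) : Real.cos (1*θ + -(Real.pi/3)) = Real.cos θ/2 + Real.sin θ*√3/2
    ∧ Real.sin (1*θ + -(Real.pi/3)) = Real.sin θ/2 - Real.cos θ*√3/2 := by
  rw [one_mul, ← sub_eq_add_neg, Real.cos_sub, Real.sin_sub, Real.cos_pi_div_three, Real.sin_pi_div_three]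
  constructor <;> ring


lemma L0m_a (hθ : θ ∈ Set.Ioo 0 (Real.pi/3)) : Ser oneS 0 (pt (lm θ) (1*θ + 0)) = pt (Real.cos θ^2 - Real.sin θ^2) (2 * Real.cos θ * Real.sin θ) := by
  obtain ⟨hy, hx, h1, -, -, he, -⟩ := sidem_facts hθ
  refine L0_val (lm_neg hθ) rfl rfl ?_ ?_ <;> rw [he, one_mul, add_zero] <;> field_simp <;> grind

lemma L1m_a (hθ : θ ∈ Set.Ioo 0 (Real.pi/3)) : (Ser oneS 1 (pt (lm θ) (1*θ + 0))).re = - Real.log (1/(2*Real.cos θ)) := by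
  obtain ⟨hy, hx, h1, -, -, he, -⟩ := sidem_facts hθ
  refine L1_re_val (lm_neg hθ) (by positivity) rfl rfl ?_
  rw [he, one_mul, add_zero]; field_simp; grind

lemma L0m_b (hθ : θ ∈ Set.Ioo 0 (Real.pi/3)) : Ser oneS 0 (pt (lm θ) (3*θ + Real.pi)) = 
    pt (-(Real.cos θ^2 - Real.sin θ^2)/((√3 * Real.cos θ - Real.sin θ)*(√3 * Real.cos θ + Real.sin θ)))
     (-2 * Real.cos θ * Real.sin θ/((√3 * Real.cos θ - Real.sin θ)*(√3 * Real.cos θ + Real.sin θ))) := by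
  obtain ⟨hy, hx, h1, hp, hw, he, hm⟩ := sidem_facts hθ
  obtain ⟨hc, hs⟩ := csm_b θ
  refine L0_val (lm_neg hθ) rfl rfl ?_ ?_ <;> rw [he, hc, hs] <;> field_simp <;> grind

lemma L1m_b (hθ : θ ∈ Set.Ioo 0 (Real.pi/3)) : (Ser oneS 1 (pt (lm θ) (3*θ + Real.pi))).re = - Real.log ((√3 * Real.cos θ - Real.sin θ)*(√3 * Real.cos θ + Real.sin θ)/(2*Real.cos θ)) := by
  obtain ⟨hy, hx, h1, hp, hw, he, hm⟩ := sidem_facts hθ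
  obtain ⟨hc, hs⟩ := csm_b θ
  refine L1_re_val (lm_neg hθ) (by positivity) rfl rfl ?_
  rw [he, hc, hs]; field_simp; grind

lemma L0m_c (hθ : θ ∈ Set.Ioo 0 (Real.pi/3)) : Ser oneS 0 (pt (lm θ) (1*θ + Real.pi/3)) = 
    pt (-Real.sin θ/(√3 * Real.cos θ + Real.sin θ)) (Real.cos θ/(√3 * Real.cos θ + Real.sin θ)) := by
  obtain ⟨hy, hx, h1, hp, hw, he, hm⟩ := sidem_facts hθ
  obtain ⟨hc, hs⟩ := csm_c θ
  refine L0_val (lm_neg hθ) rfl rfl ?_ ?_ <;> rw [he, hc, hs] <;> field_simp <;> grind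

lemma L1m_c (hθ : θ ∈ Set.Ioo 0 (Real.pi/3)) : (Ser oneS 1 (pt (lm θ) (1*θ + Real.pi/3))).re = - Real.log ((√3 * Real.cos θ + Real.sin θ)/(2*Real.cos θ)) := by
  obtain ⟨hy, hx, h1, hp, hw, he, hm⟩ := sidem_facts hθ
  obtain ⟨hc, hs⟩ := csm_c θ
  refine L1_re_val (lm_neg hθ) (by positivity) rfl rfl ?_
  rw [he, hc, hs]; field_simp; grind

lemma L0m_d (hθ : θ ∈ Set.Ioo 0 (Real.pi/3)) : Ser oneS 0 (pt (lm θ) (1*θ + -(Real.pi/3))) = 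
    pt (Real.sin θ/(√3 * Real.cos θ - Real.sin θ)) (-Real.cos θ/(√3 * Real.cos θ - Real.sin θ)) := by
  obtain ⟨hy, hx, h1, hp, hw, he, hm⟩ := sidem_facts hθ
  obtain ⟨hc, hs⟩ := csm_d θ
  refine L0_val (lm_neg hθ) rfl rfl ?_ ?_ <;> rw [he, hc, hs] <;> field_simp <;> grind

lemma L1m_d (hθ : θ ∈ Set.Ioo 0 (Real.pi/3)) : (Ser oneS 1 (pt (lm θ) (1*θ + -(Real.pi/3)))).re = - Real.log ((√3 * Real.cos θ - Real.sin θ)/(2*Real.cos θ)) := by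
  obtain ⟨hy, hx, h1, hp, hw, he, hm⟩ := sidem_facts hθ
  obtain ⟨hc, hs⟩ := csm_d θ
  refine L1_re_val (lm_neg hθ) (by positivity) rfl rfl ?_
  rw [he, hc, hs]; field_simp; grind
end

lemma lm_c0 : ContinuousAt lm 0 := (lm_deriv (by simp)).continuousAt
lemma lm0 : lm 0 < 0 := lm_neg' le_rfl (by linarith [Real.pi_pos])
lemma aff_c (m b t : ℝ) : ContinuousAt (fun t : ℝ => m*t+b) t := (aff_deriv m b t).continuousAt
lemma q2_l0 (m b : ℝ) : Tendsto (fun t => q2 (lm t) (m*t+b)) (𝓝[>] 0) (𝓝 (q2 (lm 0) (m*0+b))) :=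
  (q2_cont lm0 lm_c0 (aff_c m b 0)).tendsto.mono_left nhdsWithin_le_nhds
lemma q4_l0 (m b : ℝ) : Tendsto (fun t => q4 (lm t) (m*t+b)) (𝓝[>] 0) (𝓝 (q4 (lm 0) (m*0+b))) :=
  (q4_cont lm0 lm_c0 (aff_c m b 0)).tendsto.mono_left nhdsWithin_le_nhds
lemma q2_z (l : ℝ) : q2 l 0 = 0 := by have := q2_neg l 0; simp at this; linarith
lemma q4_z (l : ℝ) : q4 l 0 = 0 := by have := q4_neg l 0; simp at this; linarith

lemma q4_53 (l : ℝ) : q4 l (5*Real.pi/3) = - q4 l (Real.pi/3) := by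
  rw [← q4_neg, ← q4_per l (-(Real.pi/3))]; congr 1; ring
lemma q3_53 (l : ℝ) : q3 l (5*Real.pi/3) = q3 l (Real.pi/3) := by
  rw [← q3_neg l (Real.pi/3), ← q3_per l (-(Real.pi/3))]; congr 1; ring

lemma log_2c (θ : ℝ) : Real.log (2 * Real.cos θ) = - lm θ := by simp [lm]
lemma Ec_deriv {θ : ℝ} (h0 : -(Real.pi/2) < θ) (h1 : θ < Real.pi/2) : HasDerivAt (fun θ => E0 (Real.pi/2 - θ)) ((lm θ)^3) θ := by
  have a := E0_deriv (ψ := Real.pi/2 - θ) (by linarith) (by linarith)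
  have b : HasDerivAt (fun θ : ℝ => Real.pi/2 - θ) (-1) θ := by simpa using (hasDerivAt_id θ).const_sub (Real.pi/2)
  refine (a.comp θ b).congr_deriv ?_
  unfold ls
  rw [Real.sin_pi_div_two_sub, log_2c]; ring
lemma Ec_deriv' {θ : ℝ} (hθ : θ ∈ Set.Ioo 0 (Real.pi/3)) : HasDerivAt (fun θ => E0 (Real.pi/2 - θ)) ((lm θ)^3) θ :=
  Ec_deriv (by linarith [hθ.1, Real.pi_pos]) (by linarith [hθ.2, Real.pi_pos])

lemma r2m : ∀ θ ∈ Set.Ioo 0 (Real.pi/3), q2 (lm θ) (1*θ + 0) + q2 0 (2*θ+Real.pi) = 0 := by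
  apply const_right (f := fun θ => q2 (lm θ) (1*θ + 0) + q2 0 (2*θ+Real.pi))
  · intro θ hθ
    obtain ⟨hy, hx, h1, hp, hw, he, hm⟩ := sidem_facts hθ
    have a := q2_deriv (lm_neg hθ) (lm_deriv hx) (aff_deriv 1 0 θ) (L0m_a hθ) (L1m_a hθ)
    have c := c2_aff 2 Real.pi θ (2*Real.cos θ) (by positivity) (by rw [Real.cos_add_pi, Real.cos_two_mul]; ring)
    refine (a.add c).congr_deriv ?_
    rw [one_div, Real.log_inv, log_2c]
    field_simp
    grind
  · have := (q2_l0 1 0).add (c2_lim 2 Real.pi 0 (Set.Ioi 0))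
    simpa [q2_z, q2_pi] using this

lemma r3m : ∀ θ ∈ Set.Ioo 0 (Real.pi/3), q3 (lm θ) (1*θ + 0) + q3 0 (2*θ+Real.pi)/2 + (lm θ)^3/6 = zeta 3/2 := by
  apply const_left (f := fun θ => q3 (lm θ) (1*θ + 0) + q3 0 (2*θ+Real.pi)/2 + (lm θ)^3/6)
  · intro θ hθ
    obtain ⟨hy, hx, h1, hp, hw, he, hm⟩ := sidem_facts hθ
    have a := q3_deriv (lm_neg hθ) (lm_deriv hx) (aff_deriv 1 0 θ) (L0m_a hθ)
    have c := c3_aff 2 Real.pi θ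
    refine ((a.add (c.div_const 2)).add (((lm_deriv hx).pow 3).div_const 6)).congr_deriv ?_
    have := r2m θ hθ
    have e : (Real.cos θ^2 - Real.sin θ^2) * (Real.sin θ / Real.cos θ) - 2 * Real.cos θ * Real.sin θ * 1 = -(Real.sin θ / Real.cos θ) := by
      field_simp; grind
    rw [e]
    simp only [Nat.cast_ofNat, Nat.add_one_sub_one]
    linear_combination -this
  · have := ((q3_lim lm_lim lm_neg_ev (aff_lim 1 0 (Real.pi/3) (Set.Iio (Real.pi/3)))).add ((c3_lim 2 Real.pi (Real.pi/3) (Set.Iio (Real.pi/3))).div_const 2)).add ((lm_lim.pow 3).div_const 6)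
    convert! this using 2
    rw [show 1*(Real.pi/3)+0 = Real.pi/3 by ring, show 2*(Real.pi/3)+Real.pi = 5*Real.pi/3 by ring, q3_53, c3_one]
    ring

lemma r4m : ∀ θ ∈ Set.Ioo 0 (Real.pi/3), q4 (lm θ) (1*θ + 0) + E0 (Real.pi/2-θ)/3 + q4 0 (2*θ+Real.pi)/4 - zeta 3 * θ/2
    = (9/4 * q4 0 (Real.pi/3) - Real.pi * zeta 3/2)/3 := by
  apply const_left (f := fun θ => q4 (lm θ) (1*θ + 0) + E0 (Real.pi/2-θ)/3 + q4 0 (2*θ+Real.pi)/4 - zeta 3 * θ/2)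
  · intro θ hθ
    obtain ⟨hy, hx, h1, hp, hw, he, hm⟩ := sidem_facts hθ
    have a := q4_deriv (lm_neg hθ) (lm_deriv hx) (aff_deriv 1 0 θ) (L0m_a hθ)
    have c := c4_aff 2 Real.pi θ
    have e := Ec_deriv' hθ
    refine (((a.add (e.div_const 3)).add (c.div_const 4)).sub (((hasDerivAt_id θ).const_mul (zeta 3)).div_const 2)).congr_deriv ?_
    have := r3m θ hθ
    have e : (Real.cos θ^2 - Real.sin θ^2) * 1 + 2 * Real.cos θ * Real.sin θ * (Real.sin θ / Real.cos θ) = 1 := by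
      field_simp; grind
    rw [e]
    linear_combination this
  · have a := q4_lim lm_lim lm_neg_ev (aff_lim 1 0 (Real.pi/3) (Set.Iio (Real.pi/3)))
    have e := (Ec_deriv (θ := Real.pi/3) (by linarith [Real.pi_pos]) (by linarith [Real.pi_pos])).continuousAt.tendsto.mono_left (nhdsWithin_le_nhds (s := Set.Iio (Real.pi/3)))
    have c := c4_lim 2 Real.pi (Real.pi/3) (Set.Iio (Real.pi/3))
    have i := (continuous_id.tendsto (Real.pi/3)).mono_left (nhdsWithin_le_nhds (s := Set.Iio (Real.pi/3)))
    have := (((a.add (e.div_const 3)).add (c.div_const 4)).sub ((i.const_mul (zeta 3)).div_const 2))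
    convert! this using 2
    rw [show 1*(Real.pi/3) + 0 = Real.pi/3 by ring, show 2*(Real.pi/3)+Real.pi = 5*Real.pi/3 by ring, q4_53, show Real.pi/2-Real.pi/3 = Real.pi/6 by ring, E0_pi6]
    simp only [id]
    ring

lemma Ec_l0 : Tendsto (fun θ => E0 (Real.pi/2-θ)) (𝓝[>] 0) (𝓝 (E0 (Real.pi/2))) := by
  have := (Ec_deriv (θ := 0) (by linarith [Real.pi_pos]) (by linarith [Real.pi_pos])).continuousAt.tendsto.mono_left (nhdsWithin_le_nhds (s := Set.Ioi 0))
  simpa using this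

lemma E0_half : E0 (Real.pi/2) = 9/4 * q4 0 (Real.pi/3) - Real.pi * zeta 3/2 := by
  have a := q4_l0 1 0
  have c := c4_lim 2 Real.pi 0 (Set.Ioi 0)
  have i := (continuous_id.tendsto (0:ℝ)).mono_left (nhdsWithin_le_nhds (s := Set.Ioi 0))
  have := (((a.add (Ec_l0.div_const 3)).add (c.div_const 4)).sub ((i.const_mul (zeta 3)).div_const 2))
  have h2 := this.congr' (f₂ := fun _ => (9/4 * q4 0 (Real.pi/3) - Real.pi * zeta 3/2)/3) ?_
  · have := tendsto_nhds_unique h2 tendsto_const_nhds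
    simp [q4_z, q4_pi] at this
    linarith
  · filter_upwards [Ioo_mem_nhdsGT (show (0:ℝ) < Real.pi/3 by linarith [Real.pi_pos])] with θ hθ
    have := r4m θ hθ
    simp only [id]
    linarith

lemma F2m : ∀ θ ∈ Set.Ioo 0 (Real.pi/3), 9 * q2 (lm θ) (3*θ + Real.pi) - 3 * q2 (lm θ) (1*θ + Real.pi/3)
     - 3 * q2 (lm θ) (1*θ + -(Real.pi/3)) + 6 * q2 0 (2*θ+Real.pi) - 4 * q2 0 (6*θ+0) + 12 * q2 0 (2*θ+0) = 0 := by
  apply const_right (f := fun θ => 9 * q2 (lm θ) (3*θ + Real.pi) - 3 * q2 (lm θ) (1*θ + Real.pi/3)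
     - 3 * q2 (lm θ) (1*θ + -(Real.pi/3)) + 6 * q2 0 (2*θ+Real.pi) - 4 * q2 0 (6*θ+0) + 12 * q2 0 (2*θ+0))
  · intro θ hθ
    obtain ⟨hy, hx, h1, hp, hw, he, hm⟩ := sidem_facts hθ
    have a := q2_deriv (lm_neg hθ) (lm_deriv hx) (aff_deriv 3 Real.pi θ) (L0m_b hθ) (L1m_b hθ)
    have b := q2_deriv (lm_neg hθ) (lm_deriv hx) (aff_deriv 1 (Real.pi/3) θ) (L0m_c hθ) (L1m_c hθ)
    have d := q2_deriv (lm_neg hθ) (lm_deriv hx) (aff_deriv 1 (-(Real.pi/3)) θ) (L0m_d hθ) (L1m_d hθ)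
    have c := c2_aff 2 Real.pi θ (2*Real.cos θ) (by positivity) (by rw [Real.cos_add_pi, Real.cos_two_mul]; ring)
    have c6 := c2_aff 6 0 θ ((2*Real.sin θ) * ((√3 * Real.cos θ - Real.sin θ)*(√3 * Real.cos θ + Real.sin θ))) (by positivity) 
      (by rw [add_zero, show 6*θ = 2*(3*θ) by ring, Real.cos_two_mul, Real.cos_three_mul]; grind)
    have c2 := c2_aff 2 0 θ (2*Real.sin θ) (by positivity) (by rw [add_zero, Real.cos_two_mul]; nlinarith)
    refine ((((((a.const_mul 9).sub (b.const_mul 3)).sub (d.const_mul 3)).add (c.const_mul 6)).sub (c6.const_mul 4)).add (c2.const_mul 12)).congr_deriv ?_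
    rw [Real.log_div (by positivity) (by positivity), Real.log_div (by positivity) (by positivity), Real.log_div (by positivity) (by positivity), Real.log_mul (x := 2 * Real.sin θ) (by positivity) (by positivity), Real.log_mul (x := √3 * Real.cos θ - Real.sin θ) (by positivity) (by positivity), log_2c]
    have e : 9 * (-(Real.cos θ^2 - Real.sin θ^2)/((√3 * Real.cos θ - Real.sin θ)*(√3 * Real.cos θ + Real.sin θ)) * 3
       + -2 * Real.cos θ * Real.sin θ/((√3 * Real.cos θ - Real.sin θ)*(√3 * Real.cos θ + Real.sin θ)) * (Real.sin θ / Real.cos θ))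
      - 3 * (-Real.sin θ/(√3 * Real.cos θ + Real.sin θ) * 1 + Real.cos θ/(√3 * Real.cos θ + Real.sin θ) * (Real.sin θ / Real.cos θ))
      - 3 * (Real.sin θ/(√3 * Real.cos θ - Real.sin θ) * 1 + -Real.cos θ/(√3 * Real.cos θ - Real.sin θ) * (Real.sin θ / Real.cos θ)) = -9 := by
      field_simp
      grind
    linear_combination -(lm θ) * e
  · have := ((((((q2_l0 3 Real.pi).const_mul 9).sub ((q2_l0 1 (Real.pi/3)).const_mul 3)).sub ((q2_l0 1 (-(Real.pi/3))).const_mul 3)).add ((c2_lim 2 Real.pi 0 (Set.Ioi 0)).const_mul 6)).sub ((c2_lim 6 0 0 (Set.Ioi 0)).const_mul 4)).add ((c2_lim 2 0 0 (Set.Ioi 0)).const_mul 12)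
    simpa [c2_zero, q2_pi, q2_neg] using this

lemma F3m : ∀ θ ∈ Set.Ioo 0 (Real.pi/3), 3 * q3 (lm θ) (3*θ + Real.pi) - 3 * q3 (lm θ) (1*θ + Real.pi/3)
     - 3 * q3 (lm θ) (1*θ + -(Real.pi/3)) + 3 * q3 0 (2*θ+Real.pi) - 2/3 * q3 0 (6*θ+0) + 6 * q3 0 (2*θ+0) - 1/2 * (lm θ)^3 = -zeta 3 := by
  apply const_left (f := fun θ => 3 * q3 (lm θ) (3*θ + Real.pi) - 3 * q3 (lm θ) (1*θ + Real.pi/3)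
     - 3 * q3 (lm θ) (1*θ + -(Real.pi/3)) + 3 * q3 0 (2*θ+Real.pi) - 2/3 * q3 0 (6*θ+0) + 6 * q3 0 (2*θ+0) - 1/2 * (lm θ)^3)
  · intro θ hθ
    obtain ⟨hy, hx, h1, hp, hw, he, hm⟩ := sidem_facts hθ
    have a := q3_deriv (lm_neg hθ) (lm_deriv hx) (aff_deriv 3 Real.pi θ) (L0m_b hθ)
    have b := q3_deriv (lm_neg hθ) (lm_deriv hx) (aff_deriv 1 (Real.pi/3) θ) (L0m_c hθ)
    have d := q3_deriv (lm_neg hθ) (lm_deriv hx) (aff_deriv 1 (-(Real.pi/3)) θ) (L0m_d hθ)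
    have c := c3_aff 2 Real.pi θ
    have c6 := c3_aff 6 0 θ
    have c2 := c3_aff 2 0 θ
    refine (((((((a.const_mul 3).sub (b.const_mul 3)).sub (d.const_mul 3)).add (c.const_mul 3)).sub (c6.const_mul (2/3))).add (c2.const_mul 6)).sub (((lm_deriv hx).pow 3).const_mul (1/2))).congr_deriv ?_
    have e : 3 * (-(Real.cos θ^2 - Real.sin θ^2)/((√3 * Real.cos θ - Real.sin θ)*(√3 * Real.cos θ + Real.sin θ)) * (Real.sin θ / Real.cos θ)
       - -2 * Real.cos θ * Real.sin θ/((√3 * Real.cos θ - Real.sin θ)*(√3 * Real.cos θ + Real.sin θ)) * 3)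
      - 3 * (-Real.sin θ/(√3 * Real.cos θ + Real.sin θ) * (Real.sin θ / Real.cos θ) - Real.cos θ/(√3 * Real.cos θ + Real.sin θ) * 1)
      - 3 * (Real.sin θ/(√3 * Real.cos θ - Real.sin θ) * (Real.sin θ / Real.cos θ) - -Real.cos θ/(√3 * Real.cos θ - Real.sin θ) * 1) = 3 * (Real.sin θ / Real.cos θ) := by
      field_simp
      grind
    simp only [Nat.cast_ofNat, Nat.add_one_sub_one]
    linear_combination (lm θ)^2/2 * e - F2m θ hθ
  · have := (((((((q3_lim lm_lim lm_neg_ev (aff_lim 3 Real.pi (Real.pi/3) (Set.Iio (Real.pi/3)))).const_mul 3).sub ((q3_lim lm_lim lm_neg_ev (aff_lim 1 (Real.pi/3) (Real.pi/3) (Set.Iio (Real.pi/3)))).const_mul 3)).sub ((q3_lim lm_lim lm_neg_ev (aff_lim 1 (-(Real.pi/3)) (Real.pi/3) (Set.Iio (Real.pi/3)))).const_mul 3)).add ((c3_lim 2 Real.pi (Real.pi/3) (Set.Iio (Real.pi/3))).const_mul 3)).sub ((c3_lim 6 0 (Real.pi/3) (Set.Iio (Real.pi/3))).const_mul (2/3))).add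 ((c3_lim 2 0 (Real.pi/3) (Set.Iio (Real.pi/3))).const_mul 6)).sub ((lm_lim.pow 3).const_mul (1/2))
    convert! this using 2
    have z : q3 0 (2*Real.pi) = zeta 3 := by have := q3_per 0 0; rw [zero_add, c3_zero] at this; exact this
    rw [show 3*(Real.pi/3)+Real.pi = 2*Real.pi by ring, show 1*(Real.pi/3)+Real.pi/3 = 2*Real.pi/3 by ring, show 1*(Real.pi/3)+-(Real.pi/3) = 0 by ring,
      show 2*(Real.pi/3)+Real.pi = 5*Real.pi/3 by ring, show 6*(Real.pi/3)+0 = 2*Real.pi by ring, show 2*(Real.pi/3)+0=2*Real.pi/3 by ring, q3_53, z, c3_two, c3_one, c3_zero]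
    ring

lemma F4m : ∀ θ ∈ Set.Ioo 0 (Real.pi/3), q4 (lm θ) (3*θ + Real.pi) - 3 * q4 (lm θ) (1*θ + Real.pi/3)
     - 3 * q4 (lm θ) (1*θ + -(Real.pi/3)) + 3/2 * q4 0 (2*θ+Real.pi) - 1/9 * q4 0 (6*θ+0) + 3 * q4 0 (2*θ+0)
     - 2/3 * E0 (Real.pi/2-θ) + zeta 3 * θ = -2/3*(9/4 * q4 0 (Real.pi/3) - Real.pi * zeta 3/2) := by
  apply const_right (f := fun θ => q4 (lm θ) (3*θ + Real.pi) - 3 * q4 (lm θ) (1*θ + Real.pi/3)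
     - 3 * q4 (lm θ) (1*θ + -(Real.pi/3)) + 3/2 * q4 0 (2*θ+Real.pi) - 1/9 * q4 0 (6*θ+0) + 3 * q4 0 (2*θ+0)
     - 2/3 * E0 (Real.pi/2-θ) + zeta 3 * θ)
  · intro θ hθ
    obtain ⟨hy, hx, h1, hp, hw, he, hm⟩ := sidem_facts hθ
    have a := q4_deriv (lm_neg hθ) (lm_deriv hx) (aff_deriv 3 Real.pi θ) (L0m_b hθ)
    have b := q4_deriv (lm_neg hθ) (lm_deriv hx) (aff_deriv 1 (Real.pi/3) θ) (L0m_c hθ)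
    have d := q4_deriv (lm_neg hθ) (lm_deriv hx) (aff_deriv 1 (-(Real.pi/3)) θ) (L0m_d hθ)
    have c := c4_aff 2 Real.pi θ
    have c6 := c4_aff 6 0 θ
    have c2 := c4_aff 2 0 θ
    have e := Ec_deriv' hθ
    refine ((((((((a.sub (b.const_mul 3)).sub (d.const_mul 3)).add (c.const_mul (3/2))).sub (c6.const_mul (1/9))).add (c2.const_mul 3))).sub (e.const_mul (2/3))).add ((hasDerivAt_id θ).const_mul (zeta 3))).congr_deriv ?_
    have e : (-(Real.cos θ^2 - Real.sin θ^2)/((√3 * Real.cos θ - Real.sin θ)*(√3 * Real.cos θ + Real.sin θ)) * 3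
       + -2 * Real.cos θ * Real.sin θ/((√3 * Real.cos θ - Real.sin θ)*(√3 * Real.cos θ + Real.sin θ)) * (Real.sin θ / Real.cos θ))
      - 3 * (-Real.sin θ/(√3 * Real.cos θ + Real.sin θ) * 1 + Real.cos θ/(√3 * Real.cos θ + Real.sin θ) * (Real.sin θ / Real.cos θ))
      - 3 * (Real.sin θ/(√3 * Real.cos θ - Real.sin θ) * 1 + -Real.cos θ/(√3 * Real.cos θ - Real.sin θ) * (Real.sin θ / Real.cos θ)) = -1 := by
      field_simp
      grind
    linear_combination -(lm θ)^3/6 * e + F3m θ hθ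
  · have i := (continuous_id.tendsto (0:ℝ)).mono_left (nhdsWithin_le_nhds (s := Set.Ioi 0))
    have := ((((((((q4_l0 3 Real.pi)).sub ((q4_l0 1 (Real.pi/3)).const_mul 3)).sub ((q4_l0 1 (-(Real.pi/3))).const_mul 3)).add ((c4_lim 2 Real.pi 0 (Set.Ioi 0)).const_mul (3/2))).sub ((c4_lim 6 0 0 (Set.Ioi 0)).const_mul (1/9))).add ((c4_lim 2 0 0 (Set.Ioi 0)).const_mul 3)).sub (Ec_l0.const_mul (2/3))).add (i.const_mul (zeta 3))
    convert! this using 2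
    simp [c4_zero, q4_pi, q4_neg, E0_half]
    ring


noncomputable def AK (θ : ℝ) : ℝ := -6 * q4 (Real.log (Real.tan θ)) (Real.pi/2)

lemma tan_facts {θ : ℝ} (hθ : θ ∈ Set.Ioo 0 (Real.pi/4)) :
    0 < Real.sin θ ∧ 0 < Real.cos θ ∧ 0 < Real.tan θ ∧ Real.tan θ < 1 := by
  have hpi := Real.pi_pos
  have h1 := Real.sin_pos_of_pos_of_lt_pi hθ.1 (by linarith [hθ.2])
  have h2 : 0 < Real.cos θ := Real.cos_pos_of_mem_Ioo ⟨by linarith [hθ.1], by linarith [hθ.2]⟩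
  refine ⟨h1, h2, Real.tan_pos_of_pos_of_lt_pi_div_two hθ.1 (by linarith [hθ.2]), ?_⟩
  rw [← Real.tan_pi_div_four]
  exact Real.tan_lt_tan_of_lt_of_lt_pi_div_two (by linarith [hθ.1]) (by linarith) hθ.2

lemma AK_deriv {θ : ℝ} (hθ : θ ∈ Set.Ioo 0 (Real.pi/4)) : HasDerivAt AK ((Real.log (Real.tan θ))^3) θ := by
  obtain ⟨hy, hx, ht, ht1⟩ := tan_facts hθ
  have h1 := Real.sin_sq_add_cos_sq θ
  have hl : HasDerivAt (fun t => Real.log (Real.tan t)) (1/(Real.sin θ * Real.cos θ)) θ := by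
    refine ((Real.hasDerivAt_tan hx.ne').log ht.ne').congr_deriv ?_
    rw [Real.tan_eq_sin_div_cos]; field_simp
  have hneg := Real.log_neg ht ht1
  have hS : Ser oneS 0 (pt (Real.log (Real.tan θ)) (Real.pi/2)) = pt (-Real.sin θ^2) (Real.sin θ * Real.cos θ) := by
    refine L0_val hneg rfl rfl ?_ ?_ <;> rw [Real.exp_log ht, Real.cos_pi_div_two, Real.sin_pi_div_two, Real.tan_eq_sin_div_cos] <;> field_simp <;> grind
  have := (q4_deriv (l := fun t => Real.log (Real.tan t)) (δ := fun _ => Real.pi/2) hneg hl (hasDerivAt_const θ (Real.pi/2)) hS).const_mul (-6)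
  refine this.congr_deriv ?_
  field_simp
  ring

lemma AK_zero : Tendsto AK (𝓝[>] 0) (𝓝 0) := by
  have hl : Tendsto (fun t => Real.log (Real.tan t)) (𝓝[>] 0) atBot := by
    refine Real.tendsto_log_nhdsGT_zero.comp ?_
    rw [tendsto_nhdsWithin_iff]
    constructor
    · have := (Real.continuousAt_tan (x := 0)).2 (by simp)
      have := this.tendsto
      rw [Real.tan_zero] at this
      exact this.mono_left nhdsWithin_le_nhds
    · filter_upwards [Ioo_mem_nhdsGT (show (0:ℝ) < Real.pi/4 by linarith [Real.pi_pos])] with t ht using (tan_facts ht).2.2.1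
  have := (q4_bot (δ := fun _ => Real.pi/2) hl).const_mul (-6)
  simpa [AK, neg_mul] using this.congr (f₂ := AK) (fun _ => rfl)

lemma q4_pi_add (l d : ℝ) : q4 l (Real.pi + d) = - q4 l (Real.pi - d) := by
  rw [← q4_neg, ← q4_per l (-(Real.pi-d))]; congr 1; ring

lemma AK_pi6 : AK (Real.pi/6) = -5/2*(9/4 * q4 0 (Real.pi/3) - Real.pi * zeta 3/2) + 5/2*E0 (Real.pi/3) - 7/2 * q4 0 (Real.pi/3) - 5/8*(Real.pi*zeta 3) := by
  have hm : Real.pi/6 ∈ Set.Ioo 0 (Real.pi/3) := ⟨by linarith [Real.pi_pos], by linarith [Real.pi_pos]⟩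
  have a := F4m _ hm
  have b := r4m _ hm
  have hl : lm (Real.pi/6) = Real.log (Real.tan (Real.pi/6)) := by
    unfold lm
    rw [Real.cos_pi_div_six, Real.tan_pi_div_six, one_div, Real.log_inv]
    congr 2; ring
  rw [show 3*(Real.pi/6)+Real.pi = Real.pi + Real.pi/2 by ring, q4_pi_add, show Real.pi - Real.pi/2 = Real.pi/2 by ring, show 1*(Real.pi/6)+Real.pi/3 = Real.pi/2 by ring,
    show 1*(Real.pi/6)+-(Real.pi/3) = -(Real.pi/6) by ring, q4_neg, show 2*(Real.pi/6)+Real.pi = Real.pi + Real.pi/3 by ring, q4_pi_add, show Real.pi - Real.pi/3 = 2*Real.pi/3 by ring, 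
    c4_two, show 6*(Real.pi/6)+0 = Real.pi by ring, q4_pi, show 2*(Real.pi/6)+0 = Real.pi/3 by ring, show Real.pi/2 - Real.pi/6 = Real.pi/3 by ring, hl] at a
  rw [show 1*(Real.pi/6)+0 = Real.pi/6 by ring, show 2*(Real.pi/6)+Real.pi = Real.pi + Real.pi/3 by ring, q4_pi_add, show Real.pi - Real.pi/3 = 2*Real.pi/3 by ring, 
    c4_two, show Real.pi/2 - Real.pi/6 = Real.pi/3 by ring, hl] at b
  unfold AK
  linear_combination (3/2)*a - (9/2)*b

lemma AK_pi12 : AK (Real.pi/12) = 4*E0 (Real.pi/12) - 4*(9/4 * q4 0 (Real.pi/3) + Real.pi * zeta 3/4)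
    - 4*((9/4 * q4 0 (Real.pi/3) - Real.pi * zeta 3/2) - E0 (5*Real.pi/12)) + 20/3 * dirichletBeta 4 := by
  have hpi := Real.pi_pos
  have hm : Real.pi/12 ∈ Set.Ioo 0 (Real.pi/3) := ⟨by linarith, by linarith⟩
  have hp : Real.pi/12 ∈ Set.Ioo 0 (Real.pi/6) := ⟨by linarith, by linarith⟩
  obtain ⟨hy, hx, -⟩ := sidem_facts hm
  have a := F4m _ hm
  have b := r4m _ hm
  have c := F4p _ hp
  have d := r4p _ hp
  have hl : lm (Real.pi/12) = ls (Real.pi/12) := by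
    unfold lm ls
    rw [← Real.log_inv]
    congr 1
    have := Real.sin_two_mul (Real.pi/12)
    rw [show 2*(Real.pi/12) = Real.pi/6 by ring, Real.sin_pi_div_six] at this
    field_simp
    linarith
  have hl2 : 2 * ls (Real.pi/12) = Real.log (Real.tan (Real.pi/12)) := by
    have : ls (Real.pi/12) + lm (Real.pi/12) = Real.log (Real.tan (Real.pi/12)) := by
      unfold lm ls
      rw [← sub_eq_add_neg, ← Real.log_div (by positivity) (by positivity), Real.tan_eq_sin_div_cos]
      congr 1; field_simp
    rw [← this, hl]; ring
  have e := q4_dup (ls (Real.pi/12)) (Real.pi/4) (ls_neg hp)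
  rw [hl2, show Real.pi/4 + Real.pi = Real.pi + Real.pi/4 by ring, q4_pi_add, show Real.pi - Real.pi/4 = 3*Real.pi/4 by ring, show 2*(Real.pi/4) = Real.pi/2 by ring] at e
  have s1 : q4 0 (2*(Real.pi/12)+Real.pi) = - q4 0 (5*Real.pi/6) := by
    rw [show 2*(Real.pi/12)+Real.pi = Real.pi + Real.pi/6 by ring, q4_pi_add]; congr 2; ring
  have s2 : q4 0 (6*(Real.pi/12)+Real.pi) = - q4 0 (Real.pi/2) := by
    rw [show 6*(Real.pi/12)+Real.pi = Real.pi + Real.pi/2 by ring, q4_pi_add]; congr 2; ring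
  rw [hl, s1, show 3*(Real.pi/12)+Real.pi = Real.pi + Real.pi/4 by ring, q4_pi_add, show Real.pi - Real.pi/4 = 3*Real.pi/4 by ring,
    show 1*(Real.pi/12)+Real.pi/3 = 5*Real.pi/12 by ring, show 1*(Real.pi/12)+-(Real.pi/3) = -(Real.pi/4) by ring, q4_neg, 
    show 6*(Real.pi/12)+0 = Real.pi/2 by ring, c4_half, show 2*(Real.pi/12)+0 = Real.pi/6 by ring, show Real.pi/2 - Real.pi/12 = 5*Real.pi/12 by ring] at a
  rw [hl, s1, show 1*(Real.pi/12)+0 = Real.pi/12 by ring, show Real.pi/2 - Real.pi/12 = 5*Real.pi/12 by ring] at b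
  rw [s1, s2, c4_half, show 3*(Real.pi/12)+-(Real.pi/2) = -(Real.pi/4) by ring, q4_neg, show 1*(Real.pi/12)+-(Real.pi/6) = -(Real.pi/12) by ring, q4_neg,
    show 1*(Real.pi/12)+-(5*Real.pi/6) = -(3*Real.pi/4) by ring, q4_neg, show 2*(Real.pi/12)+0 = Real.pi/6 by ring] at c
  rw [show 1*(Real.pi/12)+-(Real.pi/2) = -(5*Real.pi/12) by ring, q4_neg, show 2*(Real.pi/12)+0 = Real.pi/6 by ring] at d
  have f := c4_AB1
  have g := c4_AB2
  unfold AK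
  linarith


noncomputable def PS (c : ℕ → ℝ) (x : ℝ) : ℝ := ∑' n : ℕ, c n * x ^ n

lemma lin_geo {ρ : ℝ} (h0 : 0 < ρ) (h1 : ρ < 1) : Summable fun n : ℕ => (2*(n:ℝ)+1) * n * ρ^n / ρ := by
  have hn : ‖ρ‖ < 1 := by rw [Real.norm_of_nonneg h0.le]; exact h1
  have a := summable_pow_mul_geometric_of_norm_lt_one 2 hn
  have b := summable_pow_mul_geometric_of_norm_lt_one 1 hn
  refine (((a.mul_left 2).add b).div_const ρ).congr fun n => ?_
  ring

lemma ps_summable {c : ℕ → ℝ} (hc : ∀ n, |c n| ≤ 2*n+1) {x : ℝ} (hx : |x| < 1) : Summable fun n : ℕ => c n * x^n := by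
  have hn : ‖|x|‖ < 1 := by simpa using hx
  have a := summable_pow_mul_geometric_of_norm_lt_one 1 hn
  have b := summable_pow_mul_geometric_of_norm_lt_one 0 hn
  refine Summable.of_norm_bounded ((a.mul_left 2).add b) fun n => ?_
  rw [norm_mul, norm_pow, Real.norm_eq_abs, Real.norm_eq_abs]
  have := mul_le_mul_of_nonneg_right (hc n) (pow_nonneg (abs_nonneg x) n)
  nlinarith

lemma ps_dterm {c : ℕ → ℝ} (hc : ∀ n, |c n| ≤ 2*n+1) {ρ : ℝ} (h0 : 0 < ρ) {y : ℝ} (hy : |y| ≤ ρ) (n : ℕ) :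
    ‖c n * ((n:ℝ) * y^(n-1))‖ ≤ (2*(n:ℝ)+1) * n * ρ^n / ρ := by
  rcases n with _ | m
  · simp
  · simp only [Nat.add_one_sub_one]
    rw [norm_mul, norm_mul, norm_pow, Real.norm_eq_abs, Real.norm_eq_abs, Real.norm_eq_abs, abs_of_nonneg (Nat.cast_nonneg (α := ℝ) (m+1))]
    have e : (2*((m+1:ℕ):ℝ)+1) * ((m+1:ℕ):ℝ) * ρ^(m+1) / ρ = (2*((m+1:ℕ):ℝ)+1) * (((m+1:ℕ):ℝ) * ρ^m) := by
      rw [pow_succ]; field_simp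
    rw [e]
    gcongr
    exact hc _

lemma ps_deriv {c : ℕ → ℝ} (hc : ∀ n, |c n| ≤ 2*n+1) {x : ℝ} (hx : |x| < 1) :
    (Summable fun n : ℕ => ((n:ℝ)+1) * c (n+1) * x^n) ∧
    HasDerivAt (PS c) (∑' n : ℕ, ((n:ℝ)+1) * c (n+1) * x^n) x := by
  obtain ⟨ρ, hρ⟩ : ∃ ρ, ρ = (1+|x|)/2 := ⟨_, rfl⟩
  have h0 : 0 < ρ := by have := abs_nonneg x; linarith
  have h1 : ρ < 1 := by linarith
  have hxρ : |x| < ρ := by linarith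
  have hm : x ∈ Metric.ball (0:ℝ) ρ := by simpa using hxρ
  have hs : Summable fun n : ℕ => c n * ((n:ℝ) * x^(n-1)) :=
    Summable.of_norm_bounded (lin_geo h0 h1) (ps_dterm hc h0 hxρ.le)
  have hd := hasDerivAt_tsum_of_isPreconnected (lin_geo h0 h1) Metric.isOpen_ball (convex_ball (0:ℝ) ρ).isPreconnected
    (g := fun (n:ℕ) y => c n * y^n) (g' := fun (n:ℕ) y => c n * ((n:ℝ) * y^(n-1)))
    (fun n y _ => (hasDerivAt_pow n y).const_mul (c n)) (fun n y hy => ps_dterm hc h0 (le_of_lt (by simpa using hy)) n)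
    hm (ps_summable hc hx) hm
  have hs' := (summable_nat_add_iff 1).2 hs
  have e : ∀ n : ℕ, c (n+1) * (((n+1:ℕ):ℝ) * x^(n+1-1)) = ((n:ℝ)+1) * c (n+1) * x^n := by
    intro n; simp; ring
  simp only [e] at hs'
  refine ⟨hs', ?_⟩
  rw [hs.tsum_eq_zero_add] at hd
  simp only [e] at hd
  rw [Nat.cast_zero, zero_mul, mul_zero, zero_add] at hd
  exact hd

noncomputable def aS (n : ℕ) : ℝ := ((2*n).choose n : ℝ) / 4^n
noncomputable def aH (n : ℕ) : ℝ := aS n * H (2*n)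

lemma aS_nonneg (n : ℕ) : 0 ≤ aS n := by unfold aS; positivity
lemma aS_le (n : ℕ) : aS n ≤ 1 := by
  unfold aS
  rw [div_le_one (by positivity)]
  have := Nat.choose_le_two_pow (2*n) n
  rw [pow_mul] at this
  exact_mod_cast this
lemma H_succ (n : ℕ) : H (n+1) = H n + 1/((n:ℝ)+1) := by unfold H; rw [Finset.sum_range_succ]
lemma H_nonneg (n : ℕ) : 0 ≤ H n := by unfold H; positivity
lemma H_le (n : ℕ) : H n ≤ n := by
  induction n with
  | zero => simp [H]
  | succ n ih =>
    rw [H_succ]; push_cast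
    have : 1/((n:ℝ)+1) ≤ 1 := by
      rw [div_le_one (by positivity)]; linarith [Nat.cast_nonneg (α := ℝ) n]
    linarith
lemma aS_abs (n : ℕ) : |aS n| ≤ 2*n+1 := by
  rw [abs_of_nonneg (aS_nonneg n)]; linarith [aS_le n, Nat.cast_nonneg (α := ℝ) n]
lemma aH_abs' (n : ℕ) : |aH n| ≤ 2*n := by
  unfold aH
  rw [abs_of_nonneg (mul_nonneg (aS_nonneg n) (H_nonneg _))]
  have := H_le (2*n)
  push_cast at this
  nlinarith [aS_nonneg n, aS_le n, H_nonneg (2*n)]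
lemma aH_abs (n : ℕ) : |aH n| ≤ 2*n+1 := by linarith [aH_abs' n]
lemma aS1_abs (n : ℕ) : |aS (n+1)| ≤ 2*n+1 := by
  rw [abs_of_nonneg (aS_nonneg _)]; linarith [aS_le (n+1), Nat.cast_nonneg (α := ℝ) n]

lemma aS_rec (n : ℕ) : 2*(((n:ℝ)+1) * aS (n+1)) = (2*n+1) * aS n := by
  have h := Nat.succ_mul_centralBinom_succ n
  unfold Nat.centralBinom at h
  unfold aS
  have h' : ((n:ℝ)+1) * ((2*(n+1)).choose (n+1) : ℝ) = 2 * (2*n+1) * ((2*n).choose n : ℝ) := by exact_mod_cast h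
  rw [pow_succ]
  field_simp
  linarith
lemma aH_rec (n : ℕ) : 2*(((n:ℝ)+1) * aH (n+1)) = (2*n+1) * aH n + aS n + aS (n+1) := by
  have h := aS_rec n
  unfold aH
  rw [show 2*(n+1) = 2*n+1+1 by ring, H_succ, H_succ]
  push_cast
  have h1 : (2*(n:ℝ)+1) ≠ 0 := by positivity
  have h2 : (2*(n:ℝ)+1+1) ≠ 0 := by positivity
  field_simp
  linear_combination (H (2*n) * (2*n+1) + 1) * (2*n+2) * h 

lemma PS_zero (c : ℕ → ℝ) : PS c 0 = c 0 := by
  unfold PS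
  rw [tsum_eq_single 0 (by intro b hb; simp [hb])]; simp

lemma PS_shift {c : ℕ → ℝ} (hc : ∀ n, |c n| ≤ 2*n+1) {x : ℝ} (hx : |x| < 1) :
    PS c x = c 0 + x * PS (fun n => c (n+1)) x := by
  unfold PS
  rw [(ps_summable hc hx).tsum_eq_zero_add, ← tsum_mul_left]
  simp only [pow_zero, mul_one]
  congr 2; ext n; ring

/-- the ODE for the two generating functions -/
lemma ps_ode {c e : ℕ → ℝ} (hc : ∀ n, |c n| ≤ 2*n+1) (he : ∀ x, |x| < 1 → Summable fun n => e n * x^n)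
    (hr : ∀ n : ℕ, 2*(((n:ℝ)+1) * c (n+1)) = (2*n+1) * c n + e n) {x : ℝ} (hx : |x| < 1) :
    ∃ d, HasDerivAt (PS c) d x ∧ 2*(1-x)*d = PS c x + PS e x := by
  obtain ⟨h1, h2⟩ := ps_deriv hc hx
  refine ⟨_, h2, ?_⟩
  have a := ps_summable hc hx
  have b := he x hx
  have h3 : Summable fun n : ℕ => (n:ℝ) * c n * x^n := by
    refine (summable_nat_add_iff 1).1 ((h1.mul_right x).congr fun n => ?_)
    push_cast; ring
  have e3 : x * ∑' n : ℕ, ((n:ℝ)+1) * c (n+1) * x^n = ∑' n : ℕ, (n:ℝ) * c n * x^n := by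
    rw [h3.tsum_eq_zero_add, ← tsum_mul_left]
    simp only [Nat.cast_zero, zero_mul, zero_add]
    congr 1; ext n; push_cast; ring
  have e4 : 2 * ∑' n : ℕ, ((n:ℝ)+1) * c (n+1) * x^n = 2 * (∑' n : ℕ, (n:ℝ) * c n * x^n) + PS c x + PS e x := by
    unfold PS
    rw [← tsum_mul_left, ← tsum_mul_left, ← (h3.mul_left 2).tsum_add a, ← ((h3.mul_left 2).add a).tsum_add b]
    congr 1; ext n
    linear_combination x^n * hr n
  linear_combination e4 - 2 * e3

lemma sin_sq_deriv (θ : ℝ) : HasDerivAt (fun t => Real.sin t ^ 2) (2 * Real.sin θ * Real.cos θ) θ := by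
  exact ((Real.hasDerivAt_sin θ).pow 2).congr_deriv (by simp)
lemma sin_sq_lt {θ : ℝ} (h : 0 < Real.cos θ) : |Real.sin θ ^ 2| < 1 := by
  rw [abs_of_nonneg (sq_nonneg _)]; nlinarith [Real.sin_sq_add_cos_sq θ]
lemma cos_pos' {θ : ℝ} (h : θ ∈ Set.Ioo 0 (Real.pi/2)) : 0 < Real.cos θ :=
  Real.cos_pos_of_mem_Ioo ⟨by linarith [h.1, Real.pi_pos], h.2⟩

lemma PS_cont0 {c : ℕ → ℝ} (hc : ∀ n, |c n| ≤ 2*n+1) :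
    Tendsto (fun θ => PS c (Real.sin θ ^2) * Real.cos θ) (𝓝[>] 0) (𝓝 (c 0)) := by
  have h := (ps_deriv hc (x := Real.sin 0 ^ 2) (by simp)).2.continuousAt
  have h2 := ContinuousAt.comp (f := fun t => Real.sin t^2) (x := (0:ℝ)) h (sin_sq_deriv 0).continuousAt
  have h3 := (h2.mul Real.continuous_cos.continuousAt).tendsto.mono_left (nhdsWithin_le_nhds (s := Set.Ioi (0:ℝ)))
  have e : (PS c ∘ fun t => Real.sin t ^ 2) 0 * Real.cos 0 = c 0 := by simp [PS_zero]
  rw [← e]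
  exact h3

lemma fS_val : ∀ θ ∈ Set.Ioo 0 (Real.pi/2), PS aS (Real.sin θ ^ 2) * Real.cos θ = 1 := by
  apply const_right (f := fun θ => PS aS (Real.sin θ ^ 2) * Real.cos θ)
  · intro θ hθ
    have hx := cos_pos' hθ
    obtain ⟨d, h1, h2⟩ := ps_ode (e := fun _ => 0) aS_abs (fun x hx => by simp) (fun n => by rw [aS_rec]; ring) (sin_sq_lt hx)
    have h3 := h1.comp θ (sin_sq_deriv θ)
    refine (h3.mul (Real.hasDerivAt_cos θ)).congr_deriv ?_
    have h4 := Real.sin_sq_add_cos_sq θ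
    have h5 : PS (fun _ => 0) (Real.sin θ ^2) = 0 := by simp [PS]
    rw [h5] at h2
    simp only [Function.comp]
    linear_combination Real.sin θ * h2 + 2 * d * Real.sin θ * h4
  · have := PS_cont0 aS_abs
    simpa [aS] using this

lemma fH_val : ∀ θ ∈ Set.Ioo 0 (Real.pi/2), PS aH (Real.sin θ ^ 2) * Real.cos θ 
     - 2 * (Real.log (Real.cos (θ/2)) - Real.log (Real.cos θ)) = 0 := by
  apply const_right (f := fun θ => PS aH (Real.sin θ ^ 2) * Real.cos θ 
     - 2 * (Real.log (Real.cos (θ/2)) - Real.log (Real.cos θ)))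
  · intro θ hθ
    have hx := cos_pos' hθ
    have hx2 := cos_pos' (θ := θ/2) ⟨by linarith [hθ.1], by linarith [hθ.2, hθ.1]⟩
    have hy := Real.sin_pos_of_pos_of_lt_pi hθ.1 (by linarith [hθ.2, Real.pi_pos])
    have hs1 : ∀ x, |x| < 1 → Summable fun n => (aS n + aS (n+1)) * x^n := fun x hx => by
      simpa only [add_mul] using (ps_summable aS_abs hx).add (ps_summable (c := fun n => aS (n+1)) aS1_abs hx)
    obtain ⟨d, h1, h2⟩ := ps_ode (e := fun n => aS n + aS (n+1)) aH_abs hs1 (fun n => by rw [aH_rec]; ring) (sin_sq_lt hx)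
    have h3 := h1.comp θ (sin_sq_deriv θ)
    have l1 := (Real.hasDerivAt_cos θ).log hx.ne'
    have l20 : HasDerivAt (fun t => Real.cos (t/2)) (-Real.sin (θ/2) * (1/2)) θ := ((hasDerivAt_id θ).div_const 2).cos
    have l2 := l20.log hx2.ne'
    refine ((h3.mul (Real.hasDerivAt_cos θ)).sub ((l2.sub l1).const_mul 2)).congr_deriv ?_
    have h4 := Real.sin_sq_add_cos_sq θ
    have h5 : PS (fun n => aS n + aS (n+1)) (Real.sin θ ^2) = PS aS (Real.sin θ^2) + PS (fun n => aS (n+1)) (Real.sin θ^2) := by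
      unfold PS
      rw [← (ps_summable aS_abs (sin_sq_lt hx)).tsum_add (ps_summable (c := fun n => aS (n+1)) aS1_abs (sin_sq_lt hx))]
      congr 1; ext n; ring
    have h6 := PS_shift aS_abs (sin_sq_lt hx)
    have h7 := fS_val θ hθ
    have h8 : aS 0 = 1 := by simp [aS]
    rw [h5] at h2
    rw [h8] at h6
    simp only [Function.comp]
    have s2 : Real.sin θ = 2 * Real.sin (θ/2) * Real.cos (θ/2) := by rw [← Real.sin_two_mul]; congr 1; ring
    have s3 : Real.cos θ = 2 * Real.cos (θ/2)^2 - 1 := by rw [← Real.cos_two_mul]; congr 1; ring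
    have s4 := Real.sin_sq_add_cos_sq (θ/2)
    have t2 : Real.sin (θ/2) / Real.cos (θ/2) = (1 - Real.cos θ)/Real.sin θ := by
      rw [div_eq_div_iff hx2.ne' hy.ne', s2, s3]; grind
    generalize PS (fun n => aS (n+1)) (Real.sin θ^2) = h at *
    generalize PS aS (Real.sin θ^2) = f at *
    have hf : f = 1/Real.cos θ := by field_simp; linarith
    have hh : h = (1/Real.cos θ - 1)/Real.sin θ^2 := by field_simp; rw [hf] at h6; field_simp at h6; linarith
    have goal2 : Real.sin θ * (f + h) - 2 * (-(1/2) * (Real.sin (θ/2) / Real.cos (θ/2)) + Real.sin θ/Real.cos θ) = 0 := by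
      rw [t2, hf, hh]; field_simp; grind
    linear_combination Real.sin θ * h2 + 2 * d * Real.sin θ * h4 + goal2
  · have a := PS_cont0 aH_abs
    have l1 := ((Real.continuous_cos.continuousAt (x := (0:ℝ))).log (by simp)).tendsto.mono_left (nhdsWithin_le_nhds (s := Set.Ioi (0:ℝ)))
    have l2 : ContinuousAt (fun θ : ℝ => Real.log (Real.cos (θ/2))) 0 := ContinuousAt.log (by fun_prop) (by simp)
    have := a.sub (((l2.tendsto.mono_left (nhdsWithin_le_nhds (s := Set.Ioi (0:ℝ)))).sub l1).const_mul 2)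
    simpa [aH, H] using this


noncomputable def bOf (a : ℕ → ℝ) (k : ℕ) : ℝ := if Even k then a (k/2) / 2^k else 0

lemma bOf_even (a : ℕ → ℝ) (n : ℕ) : bOf a (2*n) = a n / 4^n := by
  unfold bOf
  rw [if_pos (even_two_mul n), Nat.mul_div_cancel_left n (by norm_num), pow_mul]; norm_num
lemma bOf_not (a : ℕ → ℝ) (k : ℕ) (h : k ∉ Set.range (fun n : ℕ => 2*n)) : bOf a k = 0 := by
  unfold bOf
  rw [if_neg]
  rintro ⟨r, hr⟩
  exact h ⟨r, by simp; omega⟩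
lemma two_inj : Function.Injective (fun n : ℕ => 2*n) := fun a b h => by simpa using h

lemma lin_le_pow (n : ℕ) : 2*(n:ℝ)+1 ≤ 4^n := by
  induction n with
  | zero => simp
  | succ n ih => rw [pow_succ]; push_cast; linarith [Nat.cast_nonneg (α := ℝ) n]

lemma bOf_le {a : ℕ → ℝ} (ha : ∀ n, |a n| ≤ 2*n+1) : ∀ k, |bOf a k| ≤ 1 := by
  intro k
  by_cases h : k ∈ Set.range (fun n : ℕ => 2*n)
  · obtain ⟨n, rfl⟩ := h
    simp only
    rw [bOf_even, abs_div, abs_of_nonneg (show (0:ℝ) ≤ 4^n by positivity), div_le_one (by positivity)]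
    exact (ha n).trans (lin_le_pow n)
  · rw [bOf_not a k h]; simp

lemma ser0_bOf (a : ℕ → ℝ) {l s : ℝ} (hs : Real.exp l = 2*s) :
    Ser (bOf a) 0 (pt l 0) = ((2*s*PS a (s^2) : ℝ) : ℂ) := by
  unfold Ser
  have hsup : Function.support (fun k : ℕ => (bOf a k : ℂ) * Complex.exp (((k:ℂ)+1) * pt l 0) / ((k:ℂ)+1)^0) ⊆ Set.range (fun n : ℕ => 2*n) := by
    intro k hk
    by_contra h
    exact hk (by simp [bOf_not a k h])
  rw [← two_inj.tsum_eq hsup]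
  unfold PS
  rw [← tsum_mul_left, Complex.ofReal_tsum]
  congr 1; ext n
  rw [bOf_even]
  have : Complex.exp ((((2*n:ℕ):ℂ)+1) * pt l 0) = (((2*s)^(2*n+1) : ℝ) : ℂ) := by
    rw [← hs, ← Real.exp_nat_mul, Complex.ofReal_exp]
    congr 1
    simp [pt]
  rw [this]
  simp only [pow_zero, div_one]
  rw [← Complex.ofReal_mul]
  congr 1
  rw [pow_succ, pow_mul, mul_pow, mul_pow]
  norm_num
  field_simp

lemma hasSum_bOf {a : ℕ → ℝ} (ha : ∀ n, |a n| ≤ 2*n+1) (m : ℕ) (hm : 2 ≤ m) :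
    HasSum (fun n : ℕ => a n / 4^n / (2*(n:ℝ)+1)^m) (Ser (bOf a) m (pt 0 0)).re := by
  have h := Complex.hasSum_re (ser_summable2 (bOf a) (bOf_le ha) m hm (pt 0 0) (by simp)).hasSum
  have h2 := (two_inj.hasSum_iff (by intro k hk; simp [bOf_not a k hk])).2 h
  convert! h2 using 2 with n
  simp only [Function.comp]
  rw [bOf_even]
  have : ((a n / 4^n : ℝ) : ℂ) * Complex.exp ((((2*n:ℕ):ℂ)+1) * pt 0 0) / (((2*n:ℕ):ℂ)+1)^m = ((a n / 4^n / (2*(n:ℝ)+1)^m : ℝ) : ℂ) := by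
    simp [pt]
  rw [this, Complex.ofReal_re]

noncomputable def Psi (θ : ℝ) : ℝ := 9 * (R3 (bOf aH) (ls θ) 0).re + 41 * (R4 (bOf aS) (ls θ) 0).re

lemma Psi_deriv {θ : ℝ} (hθ : θ ∈ Set.Ioo 0 (Real.pi/6)) :
    HasDerivAt Psi (18 * (lm θ - lm (θ/2)) * (ls θ)^2 - 41/3*(ls θ)^3) θ := by
  obtain ⟨hy, hx, h1, hp, hw, he⟩ := sidep_facts hθ
  have hθ' : θ ∈ Set.Ioo 0 (Real.pi/2) := ⟨hθ.1, by linarith [hθ.2, Real.pi_pos]⟩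
  have hx2 := cos_pos' (θ := θ/2) ⟨by linarith [hθ.1], by linarith [hθ'.2, hθ.1]⟩
  have a := (R3_deriv (δ := fun _ => 0) (bOf_le aH_abs) (ls_neg hθ) (ls_deriv hy) (hasDerivAt_const θ 0)).cre
  have b := (R4_deriv (δ := fun _ => 0) (bOf_le aS_abs) (ls_neg hθ) (ls_deriv hy) (hasDerivAt_const θ 0)).cre
  refine ((a.const_mul 9).add (b.const_mul 41)).congr_deriv ?_
  rw [ser0_bOf _ he, ser0_bOf _ he]
  have f1 := fS_val θ hθ'
  have f2 := fH_val θ hθ'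
  generalize PS aS (Real.sin θ^2) = f at *
  generalize PS aH (Real.sin θ^2) = g at *
  have e1 : (Complex.I * ((0:ℝ):ℂ) * R2 (bOf aH) (ls θ) 0 + (ls θ:ℂ)^2/2 * (((2*Real.sin θ * g : ℝ):ℂ) * pt (Real.cos θ/Real.sin θ) 0))
     = (((ls θ)^2 * (g * Real.cos θ) : ℝ) : ℂ) := by
    have : Real.sin θ * (Real.cos θ / Real.sin θ) = Real.cos θ := by field_simp
    have h2 : (ls θ)^2 * (g * Real.cos θ) = (ls θ)^2/2 * ((2*Real.sin θ * g) * (Real.cos θ/Real.sin θ)) := by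
      linear_combination -(ls θ)^2 * g * this
    rw [h2]
    simp [pt]
  have e2 : (Complex.I * ((0:ℝ):ℂ) * R3 (bOf aS) (ls θ) 0 - (ls θ:ℂ)^3/6 * (((2*Real.sin θ * f : ℝ):ℂ) * pt (Real.cos θ/Real.sin θ) 0))
     = ((-(ls θ)^3/3 * (f * Real.cos θ) : ℝ) : ℂ) := by
    have : Real.sin θ * (Real.cos θ / Real.sin θ) = Real.cos θ := by field_simp
    have h2 : -(ls θ)^3/3 * (f * Real.cos θ) = -((ls θ)^3/6 * ((2*Real.sin θ * f) * (Real.cos θ/Real.sin θ))) := by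
      linear_combination (ls θ)^3/3 * f * this
    rw [h2]
    simp [pt]
  rw [e1, e2, Complex.ofReal_re, Complex.ofReal_re, f1, sub_eq_zero.1 f2]
  unfold lm
  rw [Real.log_mul (by norm_num) hx.ne', Real.log_mul (by norm_num) hx2.ne']
  ring

lemma Psi_zero : Tendsto Psi (𝓝[>] 0) (𝓝 0) := by
  have a := (Complex.continuous_re.tendsto 0).comp (tendsto_zero_of_bound ls_bot (f := fun θ => R3 (bOf aH) (ls θ) 0) (fun t ht => R3_bound (bOf_le aH_abs) _ 0 ht))
  have b := (Complex.continuous_re.tendsto 0).comp (tendsto_zero_of_bound ls_bot (f := fun θ => R4 (bOf aS) (ls θ) 0) (fun t ht => R4_bound (bOf_le aS_abs) _ 0 ht))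
  have := (a.const_mul 9).add (b.const_mul 41)
  convert! this using 2
  simp

lemma Psi_pi6 : Tendsto Psi (𝓝[<] (Real.pi/6)) (𝓝 (9 * (Ser (bOf aH) 3 (pt 0 0)).re + 41 * (Ser (bOf aS) 4 (pt 0 0)).re)) := by
  have a := (Complex.continuous_re.tendsto _).comp (R3_tendsto (bOf_le aH_abs) (δ := fun _ => 0) ls_lim ls_neg_ev tendsto_const_nhds)
  have b := (Complex.continuous_re.tendsto _).comp (R4_tendsto (bOf_le aS_abs) (δ := fun _ => 0) ls_lim ls_neg_ev tendsto_const_nhds)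
  have := (a.const_mul 9).add (b.const_mul 41)
  convert! this using 2
  simp [R3, R4]

noncomputable def Phi (θ : ℝ) : ℝ := 6 * AK (θ/2) + 3 * AK θ - 24 * E0 (θ/2) - 24 * E0 (Real.pi/2 - θ/2)
  - 3/2 * E0 (2*θ) - 6 * E0 (Real.pi/2 - θ) - 14/3 * E0 θ

lemma Phi_deriv {θ : ℝ} (hθ : θ ∈ Set.Ioo 0 (Real.pi/4)) : 
    HasDerivAt Phi (18 * (lm θ - lm (θ/2)) * (ls θ)^2 - 41/3*(ls θ)^3) θ := by
  have hpi := Real.pi_pos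
  obtain ⟨h0, h1⟩ := hθ
  have hθ2 : θ/2 ∈ Set.Ioo 0 (Real.pi/4) := ⟨by linarith, by linarith⟩
  obtain ⟨hy, hx, ht, -⟩ := tan_facts ⟨h0, h1⟩
  obtain ⟨hy2, hx2, ht2, -⟩ := tan_facts hθ2
  have hh : HasDerivAt (fun t : ℝ => t/2) (1/2) θ := (hasDerivAt_id θ).div_const 2
  have hd : HasDerivAt (fun t : ℝ => 2*t) 2 θ := by simpa using (hasDerivAt_id θ).const_mul 2
  have a := HasDerivAt.comp (h := fun t : ℝ => t/2) θ (AK_deriv hθ2) hh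
  have b := AK_deriv ⟨h0, h1⟩
  have c := HasDerivAt.comp (h := fun t : ℝ => t/2) θ (E0_deriv hθ2.1 (by linarith)) hh
  have d := HasDerivAt.comp (h := fun t : ℝ => t/2) θ (Ec_deriv (θ := θ/2) (by linarith) (by linarith)) hh
  have e := HasDerivAt.comp (h := fun t : ℝ => 2*t) θ (E0_deriv (ψ := 2*θ) (by linarith) (by linarith)) hd
  have f := Ec_deriv (θ := θ) (by linarith) (by linarith)
  have g := E0_deriv h0 (by linarith)
  refine (((((((a.const_mul 6).add (b.const_mul 3)).sub (c.const_mul 24)).sub (d.const_mul 24)).sub (e.const_mul (3/2))).sub (f.const_mul 6)).sub (g.const_mul (14/3))).congr_deriv ?_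
  have s1 : Real.log (Real.tan (θ/2)) = ls (θ/2) + lm (θ/2) := by
    unfold lm ls
    rw [← sub_eq_add_neg, ← Real.log_div (by positivity) (by positivity), Real.tan_eq_sin_div_cos]
    congr 1; field_simp
  have s2 : Real.log (Real.tan θ) = ls θ + lm θ := by
    unfold lm ls
    rw [← sub_eq_add_neg, ← Real.log_div (by positivity) (by positivity), Real.tan_eq_sin_div_cos]
    congr 1; field_simp
  have s3 : ls (2*θ) = ls θ - lm θ := by
    unfold lm ls
    rw [sub_neg_eq_add, ← Real.log_mul (by positivity) (by positivity), Real.sin_two_mul]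
    congr 1; ring
  have s4 : ls θ = ls (θ/2) - lm (θ/2) := by
    unfold lm ls
    rw [sub_neg_eq_add, ← Real.log_mul (by positivity) (by positivity), show Real.sin θ = Real.sin (2*(θ/2)) by congr 1; ring, Real.sin_two_mul]
    congr 1; ring
  rw [s1, s2, s3, s4]
  ring

lemma half_lim : Tendsto (fun t : ℝ => t/2) (𝓝[>] 0) (𝓝[>] 0) := by
  rw [tendsto_nhdsWithin_iff]
  constructor
  · have : ContinuousAt (fun t : ℝ => t/2) 0 := by fun_prop
    simpa using this.tendsto.mono_left (nhdsWithin_le_nhds (s := Set.Ioi (0:ℝ)))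
  · filter_upwards [self_mem_nhdsWithin] with t ht
    simp only [Set.mem_Ioi] at *; linarith
lemma dbl_lim : Tendsto (fun t : ℝ => 2*t) (𝓝[>] 0) (𝓝[>] 0) := by
  rw [tendsto_nhdsWithin_iff]
  constructor
  · have : ContinuousAt (fun t : ℝ => 2*t) 0 := by fun_prop
    simpa using this.tendsto.mono_left (nhdsWithin_le_nhds (s := Set.Ioi (0:ℝ)))
  · filter_upwards [self_mem_nhdsWithin] with t ht
    simp only [Set.mem_Ioi] at *; linarith

lemma Phi_zero : Tendsto Phi (𝓝[>] 0) (𝓝 (-(181/6) * (9/4 * q4 0 (Real.pi/3) + Real.pi * zeta 3/4) - 30 * (9/4 * q4 0 (Real.pi/3) - Real.pi * zeta 3/2))) := by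
  have a := AK_zero.comp half_lim
  have b := AK_zero
  have c := E0_zero.comp half_lim
  have d := Ec_l0.comp half_lim
  have e := E0_zero.comp dbl_lim
  have := (((((((a.const_mul 6).add (b.const_mul 3)).sub (c.const_mul 24)).sub (d.const_mul 24)).sub (e.const_mul (3/2))).sub (Ec_l0.const_mul 6)).sub (E0_zero.const_mul (14/3)))
  convert! this using 2
  rw [E0_half]; ring

lemma total : 9 * (Ser (bOf aH) 3 (pt 0 0)).re + 41 * (Ser (bOf aS) 4 (pt 0 0)).re = 40 * dirichletBeta 4 + 5 * Real.pi * zeta 3 / 12 := by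
  have hpi := Real.pi_pos
  have hc := const_right (f := fun θ => Psi θ - Phi θ) (a := 0) (b := Real.pi/6)
    (fun θ hθ => ((Psi_deriv hθ).sub (Phi_deriv ⟨hθ.1, by linarith [hθ.2]⟩)).congr_deriv (sub_self _)) (Psi_zero.sub Phi_zero)
  have h6 := (Phi_deriv (θ := Real.pi/6) ⟨by linarith, by linarith⟩).continuousAt.tendsto.mono_left (nhdsWithin_le_nhds (s := Set.Iio (Real.pi/6)))
  have hl := Psi_pi6.sub h6
  have hl2 := hl.congr' (f₂ := fun _ => _) (by
    filter_upwards [Ioo_mem_nhdsLT (show (0:ℝ) < Real.pi/6 by linarith)] with θ hθ using hc θ hθ)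
  have := tendsto_nhds_unique hl2 tendsto_const_nhds
  unfold Phi at this
  rw [show Real.pi/6/2 = Real.pi/12 by ring, AK_pi12, AK_pi6, show Real.pi/2 - Real.pi/12 = 5*Real.pi/12 by ring, show Real.pi/2-Real.pi/6 = Real.pi/3 by ring,
    show 2*(Real.pi/6) = Real.pi/3 by ring, E0_pi6] at this
  linarith

theorem stmt_17 :
    Tendsto (fun N => ∑ n ∈ Finset.range N,
      ((2*n).choose n : ℝ) / ((2*(n:ℝ)+1)^3 * 16^n) *
        (9 * H (2*n+1) + 32 / (2*(n:ℝ)+1)))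
      atTop (𝓝 (40 * dirichletBeta 4 + 5 * Real.pi * zeta 3 / 12)) := by
  have h := ((hasSum_bOf aH_abs 3 (by norm_num)).mul_left 9).add ((hasSum_bOf aS_abs 4 (by norm_num)).mul_left 41)
  rw [total] at h
  refine h.tendsto_sum_nat.congr fun N => Finset.sum_congr rfl fun n _ => ?_
  rw [H_succ]
  unfold aH aS
  have : (16:ℝ)^n = 4^n * 4^n := by rw [← mul_pow]; norm_num
  rw [this]
  push_cast
  have h1 : (2*(n:ℝ)+1) ≠ 0 := by positivity
  field_simp
  ring
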